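/- arXiv:math/9911113 — 3 statements merged into one kernel-verified Lean document; each statement's English description precedes it below -/
import Mathlib

section
/- Let D be a vertex-critical strongly connected simple digraph on n vertices, and let C be a chordless directed cycle in D on k vertices with V(C) ≠ V(D). Then every vertex v of C satisfies d(v) ≤ n − k + 2, and at least two vertices of C satisfy the strict inequality d(v) < n − k + 2. -/
/-!
Write `A` for the vertex set of the cycle, `B` for its complement, and `N⁺`, `N⁻` for the sets of
vertices of `B` having an in-neighbour, respectively an out-neighbour, in `A`.

Take a breadth-first out-forest rooted at `A`, in which every vertex of `N⁺` hangs directly below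
`A`. Its non-leaves in `B` are parents of vertices of `B \ N⁺`, so there are at most `|B| - |N⁺|`
of them. Likewise an in-forest has at most `|B| - |N⁻|` non-leaves. A vertex `w ∈ B` that is a leaf
of both forests could be deleted without destroying strong connectivity, since `A` is itself
strongly connected; so by criticality every vertex of `B` is a non-leaf of one of the forests, and
`|N⁺| + |N⁻| ≤ |B| = n - k` (`card_boundary_le`). As a vertex of a chordless cycle has exactly one
in-neighbour and one out-neighbour on the cycle, this gives the degree bound.

If the bound is attained at a vertex `v j`, then `v j` is joined to all of `N⁺` and from all of
`N⁻`. If this happens for all `j ≠ i₀`, then every vertex of `B` is reachable from each such `v j`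
and reaches it, along paths whose other vertices lie in `B`. As `B` is nonempty, `v i₀` can be
deleted, against criticality.
-/

/-- A digraph (given by its adjacency relation) is strongly connected if every
vertex is reachable from every other vertex by a directed path. -/
def StronglyConnected {V : Type*} (G : V → V → Prop) : Prop :=
  ∀ a b : V, Relation.ReflTransGen G a b

/-- The digraph obtained from `G` by deleting the vertex `z`. -/
def DelVert {V : Type*} (G : V → V → Prop) (z : V) :
    {x : V // x ≠ z} → {x : V // x ≠ z} → Prop :=
  fun a b => G a.1 b.1

/-- The digraph obtained from `G` by deleting the vertex set `A`. -/
def DelSet {V : Type*} (G : V → V → Prop) (A : Set V) :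
    {x : V // x ∉ A} → {x : V // x ∉ A} → Prop :=
  fun a b => G a.1 b.1

/-- The contraction `D/A`: the set `A` is replaced by a single new vertex
(represented by `none`) whose out-neighbors are `⋃ v ∈ A, E⁺(v) \ A` and whose
in-neighbors are `⋃ v ∈ A, E⁻(v) \ A`; edges outside `A` are preserved. -/
def Contract {V : Type*} (G : V → V → Prop) (A : Set V) :
    Option {x : V // x ∉ A} → Option {x : V // x ∉ A} → Prop
  | some u, some w => G u.1 w.1
  | none, some w => ∃ x ∈ A, G x w.1
  | some u, none => ∃ x ∈ A, G u.1 x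
  | none, none => False

/-- The degree of a vertex: `|E⁺(v)| + |E⁻(v)|`. -/
noncomputable def deg {V : Type*} (G : V → V → Prop) (v : V) : ℕ :=
  {u | G v u}.ncard + {u | G u v}.ncard

/-- The number of directed edges of the digraph. -/
noncomputable def edgeCount {V : Type*} (G : V → V → Prop) : ℕ :=
  {p : V × V | G p.1 p.2}.ncard

/-- A digraph is vertex-critical strongly connected if it is strongly connected
and the removal of any vertex destroys strong connectivity. -/
def Critical {V : Type*} (G : V → V → Prop) : Prop :=
  StronglyConnected G ∧ ∀ z : V, ¬ StronglyConnected (DelVert G z)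

/-- `v : ZMod k → V` enumerates a chordless directed cycle of `G`:
the vertices are distinct, consecutive vertices are joined by the cycle edges,
and these are the only edges of `G` among the vertices of the cycle. -/
structure IsChordlessCycle {V : Type*} (G : V → V → Prop) {k : ℕ} (v : ZMod k → V) : Prop where
  inj : Function.Injective v
  edges : ∀ i, G (v i) (v (i + 1))
  chordless : ∀ i j, G (v i) (v j) → j = i + 1

/-- The edges of `G` that avoid `w`, as a relation on all of `V`. -/
def Avoid {V : Type*} (G : V → V → Prop) (w : V) : V → V → Prop :=
  fun a b => G a b ∧ a ≠ w ∧ b ≠ w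

theorem stronglyConnected_delVert {V : Type*} {G : V → V → Prop} {w : V}
    (h : ∀ a b, a ≠ w → b ≠ w → Relation.ReflTransGen (Avoid G w) a b) :
    StronglyConnected (DelVert G w) := by
  have key : ∀ a b, Relation.ReflTransGen (Avoid G w) a b → ∀ (ha : a ≠ w) (hb : b ≠ w),
      Relation.ReflTransGen (DelVert G w) ⟨a, ha⟩ ⟨b, hb⟩ := by
    intro a b hab
    induction hab with
    | refl => intro _ _; exact .refl
    | tail _ hbc ih => intro ha hc; exact (ih ha hbc.2.1).tail hbc.1
  rintro ⟨a, ha⟩ ⟨b, hb⟩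
  exact key a b (h a b ha hb) ha hb

/-- The vertices outside `A` with an in-neighbour in `A`. -/
def OutBoundary {V : Type*} (G : V → V → Prop) (A : Set V) : Set V :=
  {u | u ∉ A ∧ ∃ a ∈ A, G a u}

theorem reflTransGen_avoid_swap {V : Type*} {G : V → V → Prop} {w a b : V}
    (h : Relation.ReflTransGen (Avoid (Function.swap G) w) a b) :
    Relation.ReflTransGen (Avoid G w) b a := by
  rw [← Relation.reflTransGen_swap]
  exact h.lift id fun x y (hxy : Avoid (Function.swap G) w x y) =>
    (⟨hxy.1, hxy.2.2, hxy.2.1⟩ : Function.swap (Avoid G w) x y)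

/-- A breadth-first forest rooted at `A`: `p` is the parent function and `f` the depth. -/
theorem exists_parent {V : Type*} {G : V → V → Prop} {A : Set V}
    (hreach : ∀ u, ∃ a ∈ A, Relation.ReflTransGen G a u) :
    ∃ (p : V → V) (f : V → ℕ), ∀ u, u ∉ A →
      G (p u) u ∧ f (p u) < f u ∧ (u ∈ OutBoundary G A → p u ∈ A) := by
  classical
  -- `S m` is the set of endpoints of walks of length `m` starting in `A`.
  let S : ℕ → Set V := fun m => Nat.rec A (fun _ T => {u | ∃ x ∈ T, G x u}) m
  have hS : ∀ u, ∃ m, u ∈ S m := by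
    intro u
    obtain ⟨a, ha, hau⟩ := hreach u
    induction hau with
    | refl => exact ⟨0, ha⟩
    | tail _ hbc ih =>
      obtain ⟨m, hm⟩ := ih
      exact ⟨m + 1, _, hm, hbc⟩
  let f : V → ℕ := fun u => sInf {m | u ∈ S m}
  have hf : ∀ u m, u ∈ S m → f u ≤ m := fun u m h => Nat.sInf_le h
  have hfu : ∀ u, u ∈ S (f u) := fun u => Nat.sInf_mem (hS u)
  have hpos : ∀ u, u ∉ A → 0 < f u := by
    intro u hu
    rcases Nat.eq_zero_or_pos (f u) with h | h
    · have := hfu u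
      rw [h] at this
      exact absurd this hu
    · exact h
  have : ∀ u, ∃ x, u ∉ A → G x u ∧ f x < f u ∧ (u ∈ OutBoundary G A → x ∈ A) := by
    intro u
    by_cases hu : u ∈ A
    · exact ⟨u, fun h => absurd hu h⟩
    by_cases hN : u ∈ OutBoundary G A
    · obtain ⟨a, ha, hau⟩ := hN.2
      exact ⟨a, fun _ => ⟨hau, (hf a 0 ha).trans_lt (hpos u hu), fun _ => ha⟩⟩
    · obtain ⟨m, hm⟩ := Nat.exists_eq_succ_of_ne_zero (hpos u hu).ne'
      have h := hfu u
      rw [hm] at h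
      obtain ⟨x, hx, hxu⟩ := h
      exact ⟨x, fun _ => ⟨hxu, by rw [hm]; exact Nat.lt_succ_of_le (hf x m hx),
        fun h => absurd h hN⟩⟩
  choose p hp using this
  exact ⟨p, f, hp⟩

/-- The set `L` of non-leaves of a breadth-first forest rooted at `A`: deleting a vertex outside
`A ∪ L` keeps all other vertices reachable from `A`. -/
theorem exists_nonleaves {V : Type*} [Finite V] {G : V → V → Prop} {A : Set V}
    (hreach : ∀ u, ∃ a ∈ A, Relation.ReflTransGen G a u) :
    ∃ L : Set V, L.ncard + (OutBoundary G A).ncard ≤ Aᶜ.ncard ∧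
      ∀ w, w ∉ A → w ∉ L → ∀ u, u ≠ w → ∃ a ∈ A, Relation.ReflTransGen (Avoid G w) a u := by
  obtain ⟨p, f, hp⟩ := exists_parent hreach
  refine ⟨p '' (Aᶜ \ OutBoundary G A), ?_, ?_⟩
  · have h1 : (p '' (Aᶜ \ OutBoundary G A)).ncard ≤ (Aᶜ \ OutBoundary G A).ncard :=
      Set.ncard_image_le
    have h2 := Set.ncard_sdiff_add_ncard_of_subset
      (show OutBoundary G A ⊆ Aᶜ from fun u hu => hu.1)
    omega
  · intro w hwA hwL u
    induction hm : f u using Nat.strong_induction_on generalizing u with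
    | _ m ih =>
      intro huw
      by_cases hu : u ∈ A
      · exact ⟨u, hu, .refl⟩
      obtain ⟨h1, h2, h3⟩ := hp u hu
      have hpw : p u ≠ w := by
        intro h
        by_cases hN : u ∈ OutBoundary G A
        · exact hwA (h ▸ h3 hN)
        · exact hwL ⟨u, ⟨hu, hN⟩, h⟩
      obtain ⟨a, ha, hau⟩ := ih _ (hm ▸ h2) (p u) rfl hpw
      exact ⟨a, ha, hau.tail ⟨h1, hpw, huw⟩⟩

theorem card_boundary_le {V : Type*} [Finite V] {G : V → V → Prop} {A : Set V}
    (hA : A.Nonempty) (hcrit : Critical G)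
    (hconn : ∀ w, w ∉ A → ∀ a ∈ A, ∀ b ∈ A, Relation.ReflTransGen (Avoid G w) a b) :
    (OutBoundary G A).ncard + (OutBoundary (Function.swap G) A).ncard ≤ Aᶜ.ncard := by
  obtain ⟨a₀, ha₀⟩ := hA
  obtain ⟨L, hL, hL'⟩ := exists_nonleaves (G := G) (A := A)
    fun u => ⟨a₀, ha₀, hcrit.1 a₀ u⟩
  obtain ⟨M, hM, hM'⟩ := exists_nonleaves (G := Function.swap G) (A := A)
    fun u => ⟨a₀, ha₀, Relation.reflTransGen_swap.2 (hcrit.1 u a₀)⟩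
  have hsub : Aᶜ ⊆ L ∪ M := by
    intro w hw
    by_contra h
    rw [Set.mem_union, not_or] at h
    refine hcrit.2 w (stronglyConnected_delVert fun x y hx hy => ?_)
    obtain ⟨a, ha, hax⟩ := hM' w hw h.2 x hx
    obtain ⟨b, hb, hby⟩ := hL' w hw h.1 y hy
    exact ((reflTransGen_avoid_swap hax).trans (hconn w hw a ha b hb)).trans hby
  have h1 := Set.ncard_le_ncard hsub
  have h2 := Set.ncard_union_le L M
  omega

/-- If `a ∈ A` has an edge to every out-neighbour of `A` outside `A`, then everything outside `A`
is reachable from `a` along walks avoiding any prescribed other vertex `z` of `A`. -/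
theorem reach_of_full {V : Type*} {G : V → V → Prop} {A : Set V} {a z : V} (ha : a ∈ A)
    (hz : z ∈ A) (haz : a ≠ z) (hconn : StronglyConnected G)
    (hfull : ∀ u ∈ OutBoundary G A, G a u) (u : V) (hu : u ∉ A) :
    Relation.ReflTransGen (Avoid G z) a u := by
  obtain ⟨p, f, hp⟩ := exists_parent (G := G) (A := A) fun u => ⟨a, ha, hconn a u⟩
  induction hm : f u using Nat.strong_induction_on generalizing u with
  | _ m ih =>
    have huz : u ≠ z := fun h => hu (h ▸ hz)
    obtain ⟨h1, h2, -⟩ := hp u hu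
    by_cases hN : u ∈ OutBoundary G A
    · exact .single ⟨hfull u hN, haz, huz⟩
    · have hpA : p u ∉ A := fun h => hN ⟨hu, p u, h, h1⟩
      exact (ih _ (hm ▸ h2) (p u) hpA rfl).tail ⟨h1, fun h => hpA (h ▸ hz), huz⟩

/-- A vertex `a ∈ A` with at most one out-neighbour in `A` has out-degree at most one more than
the number of its out-neighbours outside `A`. -/
theorem outdeg_le {V : Type*} [Finite V] {G : V → V → Prop} {A : Set V} {a b : V}
    (hb : ∀ u ∈ A, G a u → u = b) :
    {u | G a u}.ncard ≤ {u | u ∉ A ∧ G a u}.ncard + 1 := by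
  refine (Set.ncard_le_ncard ?_).trans (Set.ncard_insert_le b _)
  intro u hu
  by_cases h : u ∈ A
  · exact Or.inl (hb u h hu)
  · exact Or.inr ⟨h, hu⟩

theorem stmt3 {V : Type*} [Fintype V] (G : V → V → Prop) (n k : ℕ)
    (hn : Fintype.card V = n) (hirr : Irreflexive G) (hcrit : Critical G)
    (hk : 2 ≤ k) (v : ZMod k → V) (hC : IsChordlessCycle G v)
    (hne : Set.range v ≠ Set.univ) :
    (∀ i : ZMod k, deg G (v i) ≤ n - k + 2) ∧
      ∃ i j : ZMod k, i ≠ j ∧ deg G (v i) < n - k + 2 ∧ deg G (v j) < n - k + 2 := by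
  classical
  have : NeZero k := ⟨by omega⟩
  have : Fact (1 < k) := ⟨by omega⟩
  set A : Set V := Set.range v with hA
  have hcardA : A.ncard = k := by
    rw [hA, ← Set.image_univ, Set.ncard_image_of_injective _ hC.inj, Set.ncard_univ,
      Nat.card_zmod]
  have hcardB : Aᶜ.ncard = n - k := by
    have := Set.ncard_add_ncard_compl A
    rw [Nat.card_eq_fintype_card, hn] at this
    omega
  have hconn : ∀ w, w ∉ A → ∀ a ∈ A, ∀ b ∈ A, Relation.ReflTransGen (Avoid G w) a b := by
    rintro w hw _ ⟨i, rfl⟩ _ ⟨j, rfl⟩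
    have hvw : ∀ l, v l ≠ w := fun l h => hw ⟨l, h⟩
    have step : ∀ m : ℕ, Relation.ReflTransGen (Avoid G w) (v i) (v (i + m)) := by
      intro m
      induction m with
      | zero => simpa using Relation.ReflTransGen.refl
      | succ m ih =>
        refine ih.tail ⟨?_, hvw _, hvw _⟩
        simpa [add_assoc] using hC.edges (i + m)
    simpa using step (j - i).val
  have hbound := card_boundary_le (A := A) ⟨v 0, 0, rfl⟩ hcrit hconn
  rw [hcardB] at hbound
  have hout : ∀ i, {u | G (v i) u}.ncard ≤ {u | u ∉ A ∧ G (v i) u}.ncard + 1 := by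
    intro i
    refine outdeg_le (b := v (i + 1)) ?_
    rintro _ ⟨j, rfl⟩ h
    rw [hC.chordless i j h]
  have hin : ∀ i, {u | G u (v i)}.ncard ≤ {u | u ∉ A ∧ G u (v i)}.ncard + 1 := by
    intro i
    refine outdeg_le (G := Function.swap G) (b := v (i - 1)) ?_
    rintro _ ⟨j, rfl⟩ h
    rw [hC.chordless j i h, add_sub_cancel_right]
  have hsubout : ∀ i, {u | u ∉ A ∧ G (v i) u} ⊆ OutBoundary G A :=
    fun i u hu => ⟨hu.1, v i, ⟨i, rfl⟩, hu.2⟩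
  have hsubin : ∀ i, {u | u ∉ A ∧ G u (v i)} ⊆ OutBoundary (Function.swap G) A :=
    fun i u hu => ⟨hu.1, v i, ⟨i, rfl⟩, hu.2⟩
  have hcout := fun i => Set.ncard_le_ncard (hsubout i)
  have hcin := fun i => Set.ncard_le_ncard (hsubin i)
  refine ⟨fun i => ?_, ?_⟩
  · have := hout i; have := hin i; have := hcout i; have := hcin i
    unfold deg
    omega
  by_contra hcon
  -- All indices where the bound is strict coincide with a single index `i₀`.
  obtain ⟨i₀, hi₀⟩ : ∃ i₀, ∀ j, j ≠ i₀ → ¬ deg G (v j) < n - k + 2 := by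
    by_cases h : ∃ i, deg G (v i) < n - k + 2
    · obtain ⟨i, hi⟩ := h
      exact ⟨i, fun j hj hlt => hcon ⟨j, i, hj, hlt, hi⟩⟩
    · exact ⟨0, fun j _ hlt => h ⟨j, hlt⟩⟩
  have hz : v i₀ ∈ A := ⟨i₀, rfl⟩
  have hreach : ∀ j, j ≠ i₀ → ∀ u, u ∉ A →
      Relation.ReflTransGen (Avoid G (v i₀)) (v j) u ∧
      Relation.ReflTransGen (Avoid G (v i₀)) u (v j) := by
    intro j hj u hu
    have h := hi₀ j hj
    unfold deg at h
    have := hout j; have := hin j; have := hcout j; have := hcin j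
    have e1 := Set.eq_of_subset_of_ncard_le (hsubout j) (by omega)
    have e2 := Set.eq_of_subset_of_ncard_le (hsubin j) (by omega)
    have hjz : v j ≠ v i₀ := fun h => hj (hC.inj h)
    refine ⟨reach_of_full (A := A) ⟨j, rfl⟩ hz hjz hcrit.1 (fun x hx => ?_) u hu,
      reflTransGen_avoid_swap (reach_of_full (A := A) ⟨j, rfl⟩ hz hjz
        (fun a b => Relation.reflTransGen_swap.2 (hcrit.1 b a)) (fun x hx => ?_) u hu)⟩
    · rw [← e1] at hx; exact hx.2
    · rw [← e2] at hx; exact hx.2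
  obtain ⟨u₀, hu₀⟩ : ∃ u, u ∉ A := (Set.ne_univ_iff_exists_notMem A).1 hne
  -- Everything other than `v i₀` is mutually reachable with `u₀`.
  have hhub : ∀ x, x ≠ v i₀ → Relation.ReflTransGen (Avoid G (v i₀)) u₀ x ∧
      Relation.ReflTransGen (Avoid G (v i₀)) x u₀ := by
    intro x hx
    by_cases hxA : x ∈ A
    · obtain ⟨j, rfl⟩ := hxA
      have hj : j ≠ i₀ := fun h => hx (h ▸ rfl)
      exact (hreach j hj u₀ hu₀).symm
    · obtain ⟨j, hj⟩ := exists_ne i₀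
      exact ⟨(hreach j hj u₀ hu₀).2.trans (hreach j hj x hxA).1,
        (hreach j hj x hxA).2.trans (hreach j hj u₀ hu₀).1⟩
  exact hcrit.2 (v i₀) (stronglyConnected_delVert fun a b ha hb =>
    (hhub a ha).2.trans (hhub b hb).1)
end

section
/- If D is a vertex-critical strongly connected simple digraph on n ≥ 4 vertices, then the number of directed edges of D is at most C(n,2) − n + 4 = n(n−1)/2 − n + 4. -/
namespace CritStrong

open Finset
open scoped Classical

/-- The number of edges of `G` from `A` to `B`. -/
noncomputable def e {V : Type*} (G : V → V → Prop) (A B : Finset V) : ℕ :=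
  ∑ u ∈ A, #{v ∈ B | G u v}

/-- The out-neighbours of the set `S` outside `S`; the in-neighbours are `outN (flip G) S`. -/
noncomputable def outN {V : Type*} [Fintype V] (G : V → V → Prop) (S : Finset V) : Finset V :=
  {v ∈ Sᶜ | ∃ s ∈ S, G s v}

/-- The set `X` can be entered from outside only through the vertex `z`. -/
def OnlyVia {V : Type*} (G : V → V → Prop) (z : V) (X : Finset V) : Prop :=
  ∀ u, u ∉ X → u ≠ z → ∀ x ∈ X, ¬ G u x

/-- Contracting `S` to a single vertex gives a strongly connected digraph in which every vertex
other than the contracted one is critical. Both conditions are expressed through cuts: a set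
avoiding `S` can always be entered and left, and for each `z ∉ S` some nonempty set avoiding `S`
and `z` can be entered (or left) only through `z`. -/
structure AC {V : Type*} (G : V → V → Prop) (S : Finset V) : Prop where
  enter : ∀ X : Finset V, X.Nonempty → Disjoint X S → ∃ u, u ∉ X ∧ ∃ x ∈ X, G u x
  leave : ∀ X : Finset V, X.Nonempty → Disjoint X S → ∃ u, u ∉ X ∧ ∃ x ∈ X, G x u
  crit : ∀ z, z ∉ S → ∃ X : Finset V, X.Nonempty ∧ Disjoint X S ∧ z ∉ X ∧
    (OnlyVia G z X ∨ OnlyVia (flip G) z X)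

/-- `x 0, …, x m` are the interior vertices of a directed path leaving `S` and returning to it (an
ear; its two ends in `S` may coincide). The last four fields are the properties of a shortest ear:
the vertices are distinct, there are no forward chords, and only the two ends are joined to `S`
by an edge in the direction of the path. -/
structure Ear {V : Type*} (G : V → V → Prop) (S : Finset V) (m : ℕ) (x : ℕ → V) : Prop where
  out : ∀ i ≤ m, x i ∉ S
  step : ∀ i < m, G (x i) (x (i + 1))
  start : ∃ s ∈ S, G s (x 0)
  finish : ∃ s ∈ S, G (x m) s
  start_only : ∀ i ≤ m, ∀ s ∈ S, G s (x i) → i = 0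
  finish_only : ∀ i ≤ m, ∀ s ∈ S, G (x i) s → i = m
  chord : ∀ i ≤ m, ∀ l ≤ m, G (x i) (x l) → l ≤ i + 1
  inj : ∀ i ≤ m, ∀ l ≤ m, x i = x l → i = l

/-- The vertex set of the path `x 0, …, x m`. -/
noncomputable def ran {V : Type*} (m : ℕ) (x : ℕ → V) : Finset V := (range (m + 1)).image x

/-- The subdigraph induced on `A` is strongly connected, in cut form. -/
def Str {V : Type*} (G : V → V → Prop) (A : Finset V) : Prop :=
  ∀ X ⊆ A, X.Nonempty → X ≠ A → ∃ x ∈ X, ∃ u ∈ A, u ∉ X ∧ G x u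

variable {V : Type*} {G : V → V → Prop}

lemma mem_ran {m : ℕ} {x : ℕ → V} {v : V} : v ∈ ran m x ↔ ∃ i ≤ m, x i = v := by
  simp [ran]

/-! ### Counting edges -/

lemma e_flip (A B : Finset V) : e (flip G) A B = e G B A := by
  unfold e
  exact (Finset.sum_card_bipartiteAbove_eq_sum_card_bipartiteBelow (s := B) (t := A) G).symm

lemma e_union_left {A A' : Finset V} (h : Disjoint A A') (B : Finset V) :
    e G (A ∪ A') B = e G A B + e G A' B := Finset.sum_union h

lemma e_union_right (A : Finset V) {B B' : Finset V} (h : Disjoint B B') :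
    e G A (B ∪ B') = e G A B + e G A B' := by
  rw [← e_flip, e_union_left h, e_flip, e_flip]

lemma edgeCount_eq [Fintype V] : edgeCount G = e G univ univ := by
  unfold edgeCount e
  simp only [card_filter]
  rw [← Finset.sum_product' univ univ (fun u v => if G u v then 1 else 0), ← card_filter,
    ← Set.ncard_coe_finset]
  congr 1
  ext p
  simp

lemma outN_subset [Fintype V] (S T : Finset V) :
    outN G S ∩ (S ∪ T)ᶜ ⊆ outN G (S ∪ T) := by
  intro v
  simp only [outN, mem_inter, mem_filter, mem_compl, mem_union]
  rintro ⟨⟨_, s, hs, h⟩, h2⟩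
  exact ⟨h2, s, Or.inl hs, h⟩

/-- Every vertex of `T` sends at most `|outN G (S ∪ T)|` edges out of `S ∪ T`. -/
lemma e_le [Fintype V] (S T : Finset V) :
    e G T (S ∪ T)ᶜ ≤ #T * #(outN G (S ∪ T)) := by
  unfold e
  rw [← smul_eq_mul]
  refine Finset.sum_le_card_nsmul _ _ _ fun u hu => Finset.card_le_card ?_
  intro v
  simp only [outN, mem_filter]
  exact fun h => ⟨h.1, u, mem_union_right _ hu, h.2⟩

/-- The bound `e_le` is strict if some vertex of `T` sends no edge out of `S ∪ T`. -/
lemma e_lt [Fintype V] {S T : Finset V} {t : V} (ht : t ∈ T) (h0 : ∀ v ∈ (S ∪ T)ᶜ, ¬ G t v)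
    (hne : (outN G (S ∪ T)).Nonempty) :
    e G T (S ∪ T)ᶜ + 1 ≤ #T * #(outN G (S ∪ T)) := by
  unfold e
  rw [← smul_eq_mul, Nat.add_one_le_iff, ← Finset.sum_const]
  refine Finset.sum_lt_sum (fun u hu => Finset.card_le_card ?_) ⟨t, ht, ?_⟩
  · intro v
    simp only [outN, mem_filter]
    exact fun h => ⟨h.1, u, mem_union_right _ hu, h.2⟩
  · rw [Finset.filter_false_of_mem h0]
    simpa using hne

/-! ### Contractions that are critical away from the contracted vertex -/

lemma AC.flip {S : Finset V} (h : AC G S) : AC (flip G) S :=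
  ⟨h.leave, h.enter, fun z hz => by
    obtain ⟨X, h1, h2, h3, h4⟩ := h.crit z hz
    exact ⟨X, h1, h2, h3, h4.symm⟩⟩

/-- A set that meets the outside of `S ∪ T` and is entered only through a vertex of `T` yields an
out-neighbour of `S ∪ T` that is not an out-neighbour of `S`. -/
lemma outN_lt [Fintype V] {S T X : Finset V} {z : V} (h : AC G S) (hz : z ∈ T)
    (hX : Disjoint X S) (hzS : z ∉ S) (hv : OnlyVia G z X) (hW : (X ∩ (S ∪ T)ᶜ).Nonempty) :
    #(outN G S ∩ (S ∪ T)ᶜ) + 1 ≤ #(outN G (S ∪ T)) := by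
  obtain ⟨u, hu, y, hy, hG⟩ := h.enter _ hW (hX.mono_left inter_subset_left)
  rw [mem_inter] at hy
  have hyO : y ∉ outN G S ∩ (S ∪ T)ᶜ := by
    simp only [outN, mem_inter, mem_filter, not_and]
    rintro ⟨_, s, hs, hsy⟩
    exact absurd hsy (hv s (fun hsX => disjoint_left.1 hX hsX hs)
      (fun hh => hzS (hh ▸ hs)) y hy.1)
  have huT : u ∈ S ∪ T := by
    by_contra hc
    by_cases huX : u ∈ X
    · exact hu (mem_inter.2 ⟨huX, mem_compl.2 hc⟩)
    · by_cases huz : u = z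
      · exact hc (huz ▸ mem_union_right _ hz)
      · exact hv u huX huz y hy.1 hG
  have hyO' : y ∈ outN G (S ∪ T) := mem_filter.2 ⟨hy.2, u, huT, hG⟩
  exact Nat.add_one_le_iff.2 (card_lt_card
    (Finset.ssubset_iff_subset_ne.2 ⟨outN_subset S T, fun hh => hyO (hh ▸ hyO')⟩))

/-- The case of `slack` where the set witnessing criticality of `z ∈ T` can be entered only through
`z`. Either this set meets the outside of `S ∪ T` and `outN_lt` applies, or it lies in `T` and its
vertices receive no edges from outside `S ∪ T`. -/
lemma slack_aux [Fintype V] {S T X : Finset V} {z : V} (h : AC G S) (hz : z ∈ T)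
    (hX : Disjoint X S) (hXn : X.Nonempty) (hzS : z ∉ S) (hv : OnlyVia G z X)
    (hW : ((S ∪ T)ᶜ).Nonempty) :
    #(outN G S ∩ (S ∪ T)ᶜ) + #(outN (flip G) S ∩ (S ∪ T)ᶜ) + e G T (S ∪ T)ᶜ + e G (S ∪ T)ᶜ T + 1
      ≤ (#T + 1) * (#(outN G (S ∪ T)) + #(outN (flip G) (S ∪ T))) := by
  have a1 := card_le_card (outN_subset (G := G) S T)
  have a2 := card_le_card (outN_subset (G := flip G) S T)
  have a3 := e_le (G := G) S T
  have a4 := e_le (G := flip G) S T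
  rw [e_flip] at a4
  by_cases hXW : (X ∩ (S ∪ T)ᶜ).Nonempty
  · have := outN_lt h hz hX hzS hv hXW
    linarith
  · have a5 : e (flip G) T (S ∪ T)ᶜ + 1 ≤ #T * #(outN (flip G) (S ∪ T)) := by
      obtain ⟨t, ht⟩ := hXn
      have hXT : ∀ w ∈ (S ∪ T)ᶜ, w ∉ X := fun w hw hwX => hXW ⟨w, mem_inter.2 ⟨hwX, hw⟩⟩
      have htT : t ∈ T := by
        have h1 : t ∈ S ∪ T := by
          by_contra hc
          exact hXT t (mem_compl.2 hc) ht
        exact (mem_union.1 h1).resolve_left fun hs => disjoint_left.1 hX ht hs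
      refine e_lt htT (fun v hvW => hv v (hXT v hvW) ?_ t ht) ?_
      · rintro rfl
        exact mem_compl.1 hvW (mem_union_right _ hz)
      · obtain ⟨u, hu, w, hw, hG⟩ := h.leave _ hW
          (disjoint_left.2 fun a ha hs => mem_compl.1 ha (mem_union_left _ hs))
        exact ⟨w, mem_filter.2 ⟨hw, u, by rwa [mem_compl, not_not] at hu, hG⟩⟩
    rw [e_flip] at a5
    linarith

/-- The contracted vertex `S` and the vertices of `T` cannot all have every neighbour that `S ∪ T`
has outside: otherwise a vertex of `T` could be deleted without destroying strong connectivity. -/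
lemma slack [Fintype V] {S T : Finset V} (h : AC G S) (hT : T.Nonempty) (hST : Disjoint S T)
    (hW : ((S ∪ T)ᶜ).Nonempty) :
    #(outN G S ∩ (S ∪ T)ᶜ) + #(outN (flip G) S ∩ (S ∪ T)ᶜ) + e G T (S ∪ T)ᶜ + e G (S ∪ T)ᶜ T + 1
      ≤ (#T + 1) * (#(outN G (S ∪ T)) + #(outN (flip G) (S ∪ T))) := by
  obtain ⟨z, hz⟩ := hT
  have hzS : z ∉ S := fun hs => disjoint_left.1 hST hs hz
  obtain ⟨X, h1, h2, h3, h4 | h4⟩ := h.crit z hzS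
  · exact slack_aux h hz h2 h1 hzS h4 hW
  · have := slack_aux h.flip hz h2 h1 hzS h4 hW
    rw [e_flip, e_flip] at this
    change #(outN (_root_.flip G) S ∩ (S ∪ T)ᶜ) + #(outN G S ∩ (S ∪ T)ᶜ) + _ + _ + 1
      ≤ (#T + 1) * (#(outN (_root_.flip G) (S ∪ T)) + #(outN G (S ∪ T))) at this
    linarith

/-- Contracting an ear together with `S` preserves `AC`: a set avoiding `S` that can be entered
(or left) only through a vertex `z` outside the ear cannot meet the ear. -/
lemma AC.ear {S : Finset V} (h : AC G S) {m : ℕ} {x : ℕ → V} (hx : Ear G S m x) :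
    AC G (S ∪ ran m x) := by
  refine ⟨fun X h1 h2 => h.enter X h1 (disjoint_union_right.1 h2).1,
    fun X h1 h2 => h.leave X h1 (disjoint_union_right.1 h2).1, fun z hz => ?_⟩
  simp only [mem_union, not_or, mem_ran, not_exists, not_and] at hz
  obtain ⟨X, h1, h2, h3, h4⟩ := h.crit z hz.1
  refine ⟨X, h1, disjoint_union_right.2 ⟨h2, ?_⟩, h3, h4⟩
  rw [disjoint_right]
  intro v hv
  obtain ⟨i, hi, rfl⟩ := mem_ran.1 hv
  rcases h4 with h4 | h4
  · clear hv
    induction i with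
    | zero =>
      obtain ⟨s, hs, hG⟩ := hx.start
      exact fun hX => h4 s (fun h' => disjoint_left.1 h2 h' hs)
        (fun hh => hz.1 (hh ▸ hs)) _ hX hG
    | succ i ih =>
      exact fun hX => h4 _ (ih (by omega)) (hz.2 i (by omega)) _ hX (hx.step i (by omega))
  · clear hv
    induction hi using Nat.decreasingInduction with
    | self =>
      obtain ⟨s, hs, hG⟩ := hx.finish
      exact fun hX => h4 s (fun h' => disjoint_left.1 h2 h' hs)
        (fun hh => hz.1 (hh ▸ hs)) _ hX hG
    | of_succ i hi ih =>
      exact fun hX => h4 _ ih (hz.2 (i + 1) (by omega)) _ hX (hx.step i (by omega))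

/-! ### Ears -/

lemma exists_path {S : Finset V} {v w : V} (hv : v ∉ S)
    (h : Relation.ReflTransGen (fun a b => G a b ∧ b ∉ S) v w) :
    ∃ m, ∃ x : ℕ → V, x 0 = v ∧ x m = w ∧ (∀ i ≤ m, x i ∉ S) ∧ ∀ i < m, G (x i) (x (i + 1)) := by
  induction h with
  | refl => exact ⟨0, fun _ => v, rfl, rfl, fun _ _ => hv, by simp⟩
  | @tail b c _ hbc ih =>
    obtain ⟨m, x, h0, hm, ho, hs⟩ := ih
    refine ⟨m + 1, fun i => if i ≤ m then x i else c, by simpa using h0, by simp, ?_, ?_⟩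
    · intro i _
      by_cases him : i ≤ m
      · simpa [him] using ho i him
      · simpa [him] using hbc.2
    · intro i hi
      rcases Nat.lt_succ_iff_lt_or_eq.1 hi with h' | rfl
      · have h1 : i ≤ m := h'.le
        have h2 : i + 1 ≤ m := h'
        simpa [h1, h2] using hs i h'
      · simpa [hm] using hbc.1

/-- If every nonempty set avoiding `S` can be entered and left, then a nontrivial ear exists;
a shortest one has the chord-freeness properties required by `Ear`. -/
lemma exists_ear [Fintype V] {S : Finset V}
    (he : ∀ X : Finset V, X.Nonempty → Disjoint X S → ∃ u, u ∉ X ∧ ∃ x ∈ X, G u x)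
    (hl : ∀ X : Finset V, X.Nonempty → Disjoint X S → ∃ u, u ∉ X ∧ ∃ x ∈ X, G x u)
    (hS : Sᶜ.Nonempty) : ∃ m x, Ear G S m x := by
  let P : ℕ → Prop := fun m => ∃ x : ℕ → V, (∀ i ≤ m, x i ∉ S) ∧ (∀ i < m, G (x i) (x (i + 1))) ∧
    (∃ s ∈ S, G s (x 0)) ∧ ∃ s ∈ S, G (x m) s
  have hP : ∃ m, P m := by
    obtain ⟨s, hs, v, hv, hsv⟩ := he Sᶜ hS disjoint_compl_left
    rw [mem_compl] at hv
    rw [mem_compl, not_not] at hs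
    let R := Relation.ReflTransGen (fun a b => G a b ∧ b ∉ S) v
    have hR : ∀ w, R w → w ∉ S := by
      intro w hw
      rcases Relation.ReflTransGen.cases_tail hw with rfl | ⟨_, _, h⟩
      · exact hv
      · exact h.2
    obtain ⟨u, hu, w, hw, hwu⟩ := hl (univ.filter R)
      ⟨v, by simpa using Relation.ReflTransGen.refl⟩
      (disjoint_left.2 fun a ha => hR a (by simpa using ha))
    simp only [mem_filter, mem_univ, true_and] at hu hw
    have huS : u ∈ S := by
      by_contra hc
      exact hu (hw.tail ⟨hwu, hc⟩)
    obtain ⟨m, x, h0, hm, ho, hst⟩ := exists_path hv hw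
    exact ⟨m, x, ho, hst, ⟨s, hs, h0 ▸ hsv⟩, u, huS, hm ▸ hwu⟩
  have hmin : ∀ k, P k → Nat.find hP ≤ k := fun k hk => Nat.find_min' hP hk
  obtain ⟨x, ho, hst, hs, ht⟩ := Nat.find_spec hP
  generalize Nat.find hP = m at *
  have hfinish : ∀ i ≤ m, ∀ s ∈ S, G (x i) s → i = m := by
    intro i hi s hsS hG
    exact le_antisymm hi (hmin i ⟨x, fun j hj => ho j (hj.trans hi),
      fun j hj => hst j (hj.trans_le hi), hs, s, hsS, hG⟩)
  have hchord : ∀ i ≤ m, ∀ l ≤ m, G (x i) (x l) → l ≤ i + 1 := by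
    intro i hi l hl hG
    by_contra hc
    push Not at hc
    -- the chord `x i → x l` replaces `l - i - 1` interior vertices
    have := hmin (m - (l - i - 1))
      ⟨fun t => if t ≤ i then x t else x (t + (l - i - 1)), ?_, ?_, ?_, ?_⟩
    · omega
    · intro t h'
      dsimp only
      split_ifs
      · exact ho _ (by omega)
      · exact ho _ (by omega)
    · intro t h'
      dsimp only
      split_ifs with h1 h2 h2
      · exact hst _ (by omega)
      · obtain rfl : t = i := by omega
        rwa [show t + 1 + (l - t - 1) = l by omega]
      · omega
      · rw [show t + 1 + (l - i - 1) = t + (l - i - 1) + 1 by omega]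
        exact hst _ (by omega)
    · simpa using hs
    · dsimp only
      rw [if_neg (by omega), show m - (l - i - 1) + (l - i - 1) = m by omega]
      exact ht
  have hlt : ∀ i l, i < l → l ≤ m → x i ≠ x l := by
    intro i l hil hl heq
    rcases hl.lt_or_eq with h' | rfl
    · have := hst l h'
      rw [← heq] at this
      have := hchord i (by omega) (l + 1) (by omega) this
      omega
    · obtain ⟨s, hsS, hG⟩ := ht
      rw [← heq] at hG
      have := hfinish i hil.le s hsS hG
      omega
  refine ⟨m, x, ho, hst, hs, ht, ?_, hfinish, hchord, ?_⟩
  · intro i hi s hsS hG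
    have := hmin (m - i) ⟨fun t => x (t + i), fun t h' => ho _ (by omega), fun t h' => ?_,
      ⟨s, hsS, by simpa using hG⟩, ?_⟩
    · omega
    · dsimp only
      rw [show t + 1 + i = t + i + 1 by omega]
      exact hst _ (by omega)
    · dsimp only
      rw [show m - i + i = m by omega]
      exact ht
  · intro i hi l hl heq
    rcases lt_trichotomy i l with h' | h' | h'
    · exact absurd heq (hlt i l h' hl)
    · exact h'
    · exact absurd heq.symm (hlt l i h' hi)

namespace Ear

variable {S : Finset V} {m : ℕ} {x : ℕ → V}

lemma disj (hx : Ear G S m x) : Disjoint S (ran m x) := by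
  rw [disjoint_right]
  intro v hv
  obtain ⟨i, hi, rfl⟩ := mem_ran.1 hv
  exact hx.out i hi

lemma injOn (hx : Ear G S m x) : Set.InjOn x (range (m + 1)) := by
  intro i hi l hl
  simp only [coe_range, Set.mem_Iio] at hi hl
  exact hx.inj i (by omega) l (by omega)

lemma card (hx : Ear G S m x) : #(ran m x) = m + 1 := by
  rw [ran, card_image_of_injOn hx.injOn, card_range]

/-- Inside the ear every pair of vertices spans at most one backward edge, and the `m` path edges
are the only forward ones. -/
lemma inner (hirr : Irreflexive G) (hx : Ear G S m x) :
    2 * e G (ran m x) (ran m x) ≤ 2 * m + (m + 1) * m := by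
  have h1 : ∀ i ≤ m, #{v ∈ ran m x | G (x i) v} ≤ if i < m then i + 1 else m := by
    intro i hi
    split_ifs with him
    · calc _ ≤ #(((range (i + 2)).erase i).image x) := card_le_card ?_
        _ ≤ #((range (i + 2)).erase i) := card_image_le
        _ = i + 1 := by rw [card_erase_of_mem (by simp)]; simp
      intro v hv
      rw [mem_filter] at hv
      obtain ⟨⟨l, hl, rfl⟩, hG⟩ := And.imp_left mem_ran.1 hv
      have := hx.chord i hi l hl hG
      refine mem_image_of_mem _ (mem_erase.2 ⟨?_, mem_range.2 (by omega)⟩)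
      rintro rfl
      exact hirr _ hG
    · calc _ ≤ #((range m).image x) := card_le_card ?_
        _ ≤ #(range m) := card_image_le
        _ = m := card_range m
      intro v hv
      rw [mem_filter] at hv
      obtain ⟨⟨l, hl, rfl⟩, hG⟩ := And.imp_left mem_ran.1 hv
      refine mem_image_of_mem _ (mem_range.2 (lt_of_le_of_ne hl ?_))
      rintro rfl
      obtain rfl : i = l := by omega
      exact hirr _ hG
  have h2 : e G (ran m x) (ran m x) ≤ ∑ i ∈ range m, (i + 1) + m := by
    unfold e
    conv_lhs => rw [ran]
    rw [sum_image hx.injOn, sum_range_succ]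
    refine add_le_add (sum_le_sum fun i hi => ?_) ?_
    · rw [mem_range] at hi
      exact (h1 i hi.le).trans (by simp [hi])
    · exact (h1 m le_rfl).trans (by simp)
  have h3 : (∑ i ∈ range m, (i + 1)) * 2 = (m + 1) * m := by
    have := Finset.sum_range_id_mul_two (m + 1)
    rwa [sum_range_succ', add_zero] at this
  omega

lemma outN_inter [Fintype V] (hx : Ear G S m x) : outN G S ∩ ran m x ⊆ {x 0} := by
  intro v hv
  simp only [outN, mem_inter, mem_filter] at hv
  obtain ⟨⟨_, s, hs, hG⟩, hv⟩ := hv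
  obtain ⟨i, hi, rfl⟩ := mem_ran.1 hv
  rw [hx.start_only i hi s hs hG]
  simp

lemma inN_inter [Fintype V] (hx : Ear G S m x) : outN (flip G) S ∩ ran m x ⊆ {x m} := by
  intro v hv
  simp only [outN, mem_inter, mem_filter] at hv
  obtain ⟨⟨_, s, hs, hG⟩, hv⟩ := hv
  obtain ⟨i, hi, rfl⟩ := mem_ran.1 hv
  rw [hx.finish_only i hi s hs hG]
  simp

lemma str (hx : Ear G S m x) (hS : Str G S) : Str G (S ∪ ran m x) := by
  intro X hX hXn hne
  by_contra hcon
  push Not at hcon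
  have hmem : ∀ i ≤ m, x i ∈ S ∪ ran m x := fun i hi => mem_union_right _ (mem_ran.2 ⟨i, hi, rfl⟩)
  have hfwd : ∀ i < m, x i ∈ X → x (i + 1) ∈ X := fun i hi h => by
    by_contra hc
    exact hcon _ h _ (hmem (i + 1) hi) hc (hx.step i hi)
  have hup : ∀ i ≤ m, x i ∈ X → x m ∈ X := by
    intro i hi
    induction hi using Nat.decreasingInduction with
    | self => exact id
    | of_succ i hi ih => exact fun h => ih (hfwd i hi h)
  have hXS : (X ∩ S).Nonempty := by
    obtain ⟨v, hv⟩ := hXn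
    rcases mem_union.1 (hX hv) with h | h
    · exact ⟨v, mem_inter.2 ⟨hv, h⟩⟩
    · obtain ⟨i, hi, rfl⟩ := mem_ran.1 h
      obtain ⟨s, hs, hG⟩ := hx.finish
      refine ⟨s, mem_inter.2 ⟨?_, hs⟩⟩
      by_contra hc
      exact hcon _ (hup i hi hv) s (mem_union_left _ hs) hc hG
  have hSX : S ⊆ X := by
    by_contra hc
    obtain ⟨a, ha, u, hu, hua, hG⟩ := hS (X ∩ S) inter_subset_right hXS
      (fun hh => hc (inter_eq_right.1 hh))
    exact hcon a (mem_inter.1 ha).1 u (mem_union_left _ hu)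
      (fun hh => hua (mem_inter.2 ⟨hh, hu⟩)) hG
  have hall : ∀ i ≤ m, x i ∈ X := by
    intro i
    induction i with
    | zero =>
      intro _
      obtain ⟨s, hs, hG⟩ := hx.start
      by_contra hc
      exact hcon s (hSX hs) _ (hmem 0 (Nat.zero_le _)) hc hG
    | succ i ih => exact fun hi => hfwd i hi (ih (by omega))
  refine hne (subset_antisymm hX (union_subset hSX fun v hv => ?_))
  obtain ⟨i, hi, rfl⟩ := mem_ran.1 hv
  exact hall i hi

end Ear

/-! ### The two bounds for contractions -/

lemma card_outN_split [Fintype V] (S T : Finset V) :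
    #(outN G S) ≤ #(outN G S ∩ T) + #(outN G S ∩ (S ∪ T)ᶜ) := by
  refine (card_le_card ?_).trans (card_union_le _ _)
  intro v hv
  have := (mem_filter.1 hv).1
  simp only [mem_union, mem_inter, mem_compl] at this ⊢
  tauto

/-- The contracted vertex has total degree at most the number of other vertices. This is clear
if it lies on no 2-cycle; otherwise contract a 2-cycle through it. -/
lemma deg_le [Fintype V] (S : Finset V) (h : AC G S) :
    #(outN G S) + #(outN (flip G) S) ≤ #Sᶜ := by
  induction hk : #Sᶜ using Nat.strong_induction_on generalizing S with
  | _ k ih =>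
  subst hk
  by_cases hd : Disjoint (outN G S) (outN (flip G) S)
  · rw [← card_union_of_disjoint hd]
    exact card_le_card (union_subset (filter_subset _ _) (filter_subset _ _))
  · obtain ⟨a, ha1, ha2⟩ := not_disjoint_iff.1 hd
    obtain ⟨haS, s, hs, hsa⟩ := mem_filter.1 ha1
    obtain ⟨-, s', hs', has⟩ := mem_filter.1 ha2
    rw [mem_compl] at haS
    have hx : Ear G S 0 (fun _ => a) := by
      refine ⟨fun _ _ => haS, by simp, ⟨s, hs, hsa⟩, ⟨s', hs', has⟩, ?_, ?_, ?_, ?_⟩ <;>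
      · intros
        omega
    have hr : ran 0 (fun _ => a) = {a} := by simp [ran]
    have hac := h.ear hx
    rw [hr] at hac
    have hcard : #(S ∪ {a})ᶜ + 1 = #Sᶜ := by
      have : Sᶜ = insert a (S ∪ {a})ᶜ := by
        ext v
        by_cases hva : v = a <;> simp [hva, haS]
      rw [this, card_insert_of_notMem (by simp)]
    have hih := ih _ (by omega) (S ∪ {a}) hac rfl
    have a1 := card_le_card (outN_subset (G := G) S {a})
    have a2 := card_le_card (outN_subset (G := flip G) S {a})
    have b1 := card_outN_split (G := G) S {a}
    have b2 := card_outN_split (G := flip G) S {a}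
    have c1 : #(outN G S ∩ {a}) ≤ 1 := card_le_card inter_subset_right
    have c2 : #(outN (flip G) S ∩ {a}) ≤ 1 := card_le_card inter_subset_right
    -- criticality of `a` makes one of the two inclusions behind `a1`, `a2` strict
    obtain ⟨X, h1, h2, h3, h4⟩ := h.crit a haS
    have hXW : (X ∩ (S ∪ {a})ᶜ).Nonempty := by
      obtain ⟨v, hv⟩ := h1
      refine ⟨v, mem_inter.2 ⟨hv, ?_⟩⟩
      have hvS : v ∉ S := disjoint_left.1 h2 hv
      have hva : v ≠ a := fun hh => h3 (hh ▸ hv)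
      simp [hvS, hva]
    rcases h4 with h4 | h4
    · have := outN_lt h (mem_singleton_self a) h2 haS h4 hXW
      omega
    · have := outN_lt h.flip (mem_singleton_self a) h2 haS h4 hXW
      omega

/-- With `w` vertices outside `S`, the digraph obtained by contracting `S` has at most
`(w + 1).choose 2 + 1` edges. -/
lemma edges_le [Fintype V] (hirr : Irreflexive G) (S : Finset V) (h : AC G S) :
    2 * (e G Sᶜ Sᶜ + #(outN G S) + #(outN (flip G) S)) ≤ #Sᶜ * (#Sᶜ + 1) + 2 := by
  induction hk : #Sᶜ using Nat.strong_induction_on generalizing S with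
  | _ k ih =>
  subst hk
  by_cases hS : Sᶜ.Nonempty
  swap
  · rw [not_nonempty_iff_eq_empty] at hS
    simp [hS, e, outN]
  obtain ⟨m, x, hx⟩ := exists_ear h.enter h.leave hS
  have hac := h.ear hx
  have hin := hx.inner hirr
  have hdisj := hx.disj
  have b1 := card_outN_split (G := G) S (ran m x)
  have b2 := card_outN_split (G := flip G) S (ran m x)
  have c1 := card_le_card hx.outN_inter
  have c2 := card_le_card hx.inN_inter
  have hT := hx.card
  have hTn : (ran m x).Nonempty := card_pos.1 (by omega)
  rw [card_singleton] at c1 c2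
  generalize ran m x = T at *
  have hSc : Sᶜ = T ∪ (S ∪ T)ᶜ := by
    ext v
    have : v ∈ S → v ∉ T := fun hv => disjoint_left.1 hdisj hv
    simp only [mem_compl, mem_union]
    tauto
  have hTW : Disjoint T (S ∪ T)ᶜ :=
    disjoint_left.2 fun v hv hc => mem_compl.1 hc (mem_union_right _ hv)
  have hcard : #Sᶜ = m + 1 + #(S ∪ T)ᶜ := by
    rw [hSc, card_union_of_disjoint hTW, hT]
  have hesplit : e G Sᶜ Sᶜ =
      e G T T + e G T (S ∪ T)ᶜ + (e G (S ∪ T)ᶜ T + e G (S ∪ T)ᶜ (S ∪ T)ᶜ) := by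
    rw [hSc, e_union_left hTW, e_union_right _ hTW, e_union_right _ hTW]
  have hih := ih _ (by omega) (S ∪ T) hac rfl
  have hdeg := deg_le (S ∪ T) hac
  by_cases hW : ((S ∪ T)ᶜ).Nonempty
  · have hsl := slack h hTn hdisj hW
    rw [hT] at hsl
    rw [hesplit, hcard]
    generalize #(S ∪ T)ᶜ = w at *
    have := Nat.mul_le_mul_left (m + 1) hdeg
    nlinarith
  · rw [not_nonempty_iff_eq_empty] at hW
    rw [hesplit, hcard]
    rw [hW] at b1 b2 ⊢
    simp only [e, filter_empty, card_empty, sum_const_zero, sum_empty, inter_empty] at *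
    nlinarith

/-! ### Critical digraphs -/

lemma leave_of_strong [Fintype V] (h : StronglyConnected G) {X : Finset V} (hX : X.Nonempty)
    (hne : X ≠ univ) : ∃ u, u ∉ X ∧ ∃ x ∈ X, G x u := by
  by_contra hc
  push Not at hc
  obtain ⟨a, ha⟩ := hX
  refine hne (eq_univ_of_forall fun b => ?_)
  induction h a b with
  | refl => exact ha
  | @tail b c _ hbc ih =>
    by_contra hh
    exact hc _ hh _ ih hbc

lemma enter_of_strong [Fintype V] (h : StronglyConnected G) {X : Finset V} (hX : X.Nonempty)
    (hne : X ≠ univ) : ∃ u, u ∉ X ∧ ∃ x ∈ X, G u x := by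
  obtain ⟨u, hu, x, hx, hG⟩ := leave_of_strong h (X := Xᶜ)
    (by rwa [nonempty_iff_ne_empty, Ne, compl_eq_empty_iff])
    (by rw [Ne, compl_eq_univ_iff]; exact hX.ne_empty)
  exact ⟨x, by simpa using hx, u, by simpa using hu, hG⟩

/-- The failure of strong connectivity of `G - z` as a one-way cut of the remaining vertices. -/
lemma exists_cut [Fintype V] {z : V} (h : ¬ StronglyConnected (DelVert G z)) :
    ∃ X Y : Finset V, X.Nonempty ∧ Y.Nonempty ∧ z ∉ X ∧ z ∉ Y ∧ Disjoint X Y ∧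
      (∀ v, v ≠ z → v ∈ X ∨ v ∈ Y) ∧ ∀ a ∈ X, ∀ b ∈ Y, ¬ G a b := by
  unfold StronglyConnected at h
  push Not at h
  obtain ⟨a, b, hab⟩ := h
  let R : V → Prop := fun v => ∃ hv : v ≠ z, Relation.ReflTransGen (DelVert G z) a ⟨v, hv⟩
  refine ⟨univ.filter R, univ.filter (fun v => v ≠ z ∧ ¬ R v), ⟨a.1, ?_⟩, ⟨b.1, ?_⟩, ?_, ?_, ?_,
    ?_, ?_⟩
  · simpa [R] using ⟨a.2, Relation.ReflTransGen.refl⟩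
  · simp only [mem_filter, mem_univ, true_and]
    exact ⟨b.2, fun ⟨_, hh⟩ => hab hh⟩
  · simp [R]
  · simp
  · rw [disjoint_left]
    intro v hv hv'
    exact (mem_filter.1 hv').2.2 (mem_filter.1 hv).2
  · intro v hv
    simp only [mem_filter, mem_univ, true_and]
    tauto
  · intro u hu v hv hG
    simp only [mem_filter, mem_univ, true_and] at hu hv
    obtain ⟨hu1, hu2⟩ := hu
    exact hv.2 ⟨hv.1, hu2.tail hG⟩

lemma not_str_erase [Fintype V] (h : Critical G) (z : V) : ¬ Str G (univ.erase z) := by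
  intro hs
  obtain ⟨X, Y, hX, ⟨y, hy⟩, hzX, hzY, hd, hc, hG⟩ := exists_cut (h.2 z)
  have hyX : y ∉ X := disjoint_right.1 hd hy
  obtain ⟨a, ha, u, hu, huX, hau⟩ := hs X
    (fun v hv => mem_erase.2 ⟨fun hh => hzX (hh ▸ hv), mem_univ _⟩) hX
    (fun hh => hyX (hh ▸ mem_erase.2 ⟨fun hh => hzY (hh ▸ hy), mem_univ _⟩))
  exact hG a ha u ((hc u (mem_erase.1 hu).1).resolve_left huX) hau

/-- If the ear covers all vertices outside `A` and `A` has at least two vertices, then the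
contraction of the ear is critical at every vertex of `A`, even though the ear itself is not
strongly connected: paths through the contracted vertex lift to paths along the ear. -/
lemma ac_of_ear [Fintype V] (h : Critical G) {A : Finset V} {m : ℕ} {x : ℕ → V}
    (hx : Ear G A m x) (hA : 2 ≤ #A) (hU : A ∪ ran m x = univ) : AC G (ran m x) := by
  have hne : ∀ X : Finset V, Disjoint X (ran m x) → X ≠ univ := by
    rintro X hX rfl
    exact disjoint_left.1 hX (mem_univ (x 0)) (mem_ran.2 ⟨0, Nat.zero_le _, rfl⟩)
  refine ⟨fun X h1 h2 => enter_of_strong h.1 h1 (hne X h2),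
    fun X h1 h2 => leave_of_strong h.1 h1 (hne X h2), fun z hz => ?_⟩
  have hzx : ∀ i ≤ m, x i ≠ z := fun i hi hh => hz (mem_ran.2 ⟨i, hi, hh⟩)
  obtain ⟨X, Y, hX, hY, hzX, hzY, hd, hc, hG⟩ := exists_cut (h.2 z)
  have hXA : ∀ v, v ∉ ran m x → v ∈ A := fun v hv =>
    (mem_union.1 (hU ▸ mem_univ v)).resolve_right hv
  have hfwd : ∀ i < m, x i ∈ X → x (i + 1) ∈ X := fun i hi hiX =>
    (hc _ (hzx (i + 1) hi)).resolve_right fun hY => hG _ hiX _ hY (hx.step i hi)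
  have hviaY : OnlyVia G z Y := fun u hu huz y hy hh =>
    hG u ((hc u huz).resolve_right hu) y hy hh
  have hviaX : OnlyVia (flip G) z X := fun u hu huz y hy hh =>
    hG y hy u ((hc u huz).resolve_left hu) hh
  by_cases h0 : x 0 ∈ X
  · have hall : ∀ i ≤ m, x i ∈ X := by
      intro i
      induction i with
      | zero => exact fun _ => h0
      | succ i ih => exact fun hi => hfwd i hi (ih (by omega))
    refine ⟨Y, hY, disjoint_right.2 fun v hv => ?_, hzY, Or.inl hviaY⟩
    obtain ⟨i, hi, rfl⟩ := mem_ran.1 hv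
    exact disjoint_left.1 hd (hall i hi)
  by_cases hm : x m ∈ X
  swap
  · refine ⟨X, hX, disjoint_right.2 fun v hv => ?_, hzX, Or.inr hviaX⟩
    obtain ⟨i, hi, rfl⟩ := mem_ran.1 hv
    clear hv
    induction hi using Nat.decreasingInduction with
    | self => exact hm
    | of_succ i hi ih => exact fun hh => ih (hfwd i hi hh)
  -- now `x 0 ∈ Y` and `x m ∈ X`, so restricting either side of the cut to `A` keeps it closed
  by_cases hXA' : (X ∩ A).Nonempty
  · refine ⟨X ∩ A, hXA', hx.disj.mono_left inter_subset_right,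
      fun hh => hzX (mem_inter.1 hh).1, Or.inr fun u hu huz y hy hh => ?_⟩
    rw [mem_inter] at hy hu
    by_cases huX : u ∈ X
    · have huA : u ∈ ran m x := by
        by_contra hcon
        exact hu ⟨huX, hXA u hcon⟩
      obtain ⟨i, hi, rfl⟩ := mem_ran.1 huA
      have := hx.start_only i hi y hy.2 hh
      subst this
      exact h0 huX
    · exact hviaX u huX huz y hy.1 hh
  · have hYA : (Y ∩ A).Nonempty := by
      obtain ⟨a, ha, haz⟩ := exists_mem_ne (by omega : 1 < #A) z
      refine ⟨a, mem_inter.2 ⟨(hc a haz).resolve_left fun haX => ?_, ha⟩⟩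
      exact hXA' ⟨a, mem_inter.2 ⟨haX, ha⟩⟩
    refine ⟨Y ∩ A, hYA, hx.disj.mono_left inter_subset_right,
      fun hh => hzY (mem_inter.1 hh).1, Or.inl fun u hu huz y hy hh => ?_⟩
    rw [mem_inter] at hy hu
    by_cases huY : u ∈ Y
    · have huA : u ∈ ran m x := by
        by_contra hcon
        exact hu ⟨huY, hXA u hcon⟩
      obtain ⟨i, hi, rfl⟩ := mem_ran.1 huA
      have := hx.finish_only i hi y hy.2 hh
      subst this
      exact disjoint_left.1 hd hm huY
    · exact hviaY u huY huz y hy.1 hh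

/-- A vertex of `A` sends at most one edge to the ear, namely to `x 0`, so contracting the ear
merges no such edges. -/
lemma e_to_ear [Fintype V] {A : Finset V} {m : ℕ} {x : ℕ → V}
    (hx : Ear G A m x) : e G A (ran m x) ≤ #(outN (flip G) (ran m x)) := by
  have h1 : ∀ a ∈ A, ∀ v ∈ ran m x, G a v → v = x 0 := by
    intro a ha v hv hG
    obtain ⟨i, hi, rfl⟩ := mem_ran.1 hv
    rw [hx.start_only i hi a ha hG]
  unfold e
  calc _ ≤ ∑ a ∈ A, if G a (x 0) then 1 else 0 := sum_le_sum fun a ha => ?_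
    _ = #{a ∈ A | G a (x 0)} := (card_filter _ _).symm
    _ ≤ _ := card_le_card fun a ha => ?_
  · split_ifs with hG
    · exact card_le_one.2 fun b hb c hc => by
        rw [mem_filter] at hb hc
        rw [h1 a ha b hb.1 hb.2, h1 a ha c hc.1 hc.2]
    · rw [filter_false_of_mem fun v hv hh => hG (h1 a ha v hv hh ▸ hh)]
      simp
  · rw [mem_filter] at ha
    exact mem_filter.2 ⟨mem_compl.2 (disjoint_left.1 hx.disj ha.1), x 0,
      mem_ran.2 ⟨0, Nat.zero_le _, rfl⟩, ha.2⟩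

/-- The analogue of `e_to_ear` for edges from the ear to `A`, all of which start at `x m`. -/
lemma e_from_ear [Fintype V] {A : Finset V} {m : ℕ} {x : ℕ → V}
    (hx : Ear G A m x) : e G (ran m x) A ≤ #(outN G (ran m x)) := by
  have h1 : ∀ a ∈ A, ∀ v ∈ ran m x, G v a → v = x m := by
    intro a ha v hv hG
    obtain ⟨i, hi, rfl⟩ := mem_ran.1 hv
    rw [hx.finish_only i hi a ha hG]
  rw [← e_flip]
  unfold e
  calc _ ≤ ∑ a ∈ A, if G (x m) a then 1 else 0 := sum_le_sum fun a ha => ?_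
    _ = #{a ∈ A | G (x m) a} := (card_filter _ _).symm
    _ ≤ _ := card_le_card fun a ha => ?_
  · split_ifs with hG
    · exact card_le_one.2 fun b hb c hc => by
        rw [mem_filter] at hb hc
        rw [h1 a ha b hb.1 hb.2, h1 a ha c hc.1 hc.2]
    · rw [filter_false_of_mem (p := fun v => flip G a v)
        fun v hv hh => hG (h1 a ha v hv hh ▸ (show G v a from hh))]
      simp
  · rw [mem_filter] at ha
    exact mem_filter.2 ⟨mem_compl.2 (disjoint_left.1 hx.disj ha.1), x m,
      mem_ran.2 ⟨m, le_rfl, rfl⟩, ha.2⟩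

lemma bound [Fintype V] (h4 : 4 ≤ Fintype.card V) (hirr : Irreflexive G) (h : Critical G) :
    2 * e G univ univ + 2 * Fintype.card V
      ≤ Fintype.card V * (Fintype.card V - 1) + 8 := by
  have hcU : #(univ : Finset V) = Fintype.card V := card_univ
  have hear : ∀ A : Finset V, A.Nonempty → A ≠ univ → ∃ m x, Ear G A m x := by
    intro A hA hAU
    have hne : ∀ X : Finset V, Disjoint X A → X ≠ univ := by
      rintro X hX rfl
      obtain ⟨a, ha⟩ := hA
      exact disjoint_left.1 hX (mem_univ a) ha
    exact exists_ear (fun X h1 h2 => enter_of_strong h.1 h1 (hne X h2))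
      (fun X h1 h2 => leave_of_strong h.1 h1 (hne X h2))
      (by rwa [nonempty_iff_ne_empty, Ne, compl_eq_empty_iff])
  have hsing : ∀ v : V, Str G {v} := by
    intro v X hX hXn hne
    exact absurd ((Finset.subset_singleton_iff.1 hX).resolve_left hXn.ne_empty) hne
  have hsingU : ∀ v : V, ({v} : Finset V) ≠ univ := by
    intro v hh
    have := congrArg Finset.card hh
    rw [card_singleton] at this
    omega
  by_cases hbig : ∃ A : Finset V, 2 ≤ #A ∧ A ≠ univ ∧ Str G A
  · -- a largest proper strongly connected set is completed to everything by a single ear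
    obtain ⟨A, hAm, hAmax⟩ := exists_max_image
      (univ.filter fun A : Finset V => 2 ≤ #A ∧ A ≠ univ ∧ Str G A) Finset.card
      (by obtain ⟨A, hA⟩ := hbig; exact ⟨A, mem_filter.2 ⟨mem_univ _, hA⟩⟩)
    obtain ⟨-, hA2, hAU, hAS⟩ := mem_filter.1 hAm
    obtain ⟨m, x, hx⟩ := hear A (card_pos.1 (by omega)) hAU
    have hcu : #(A ∪ ran m x) = #A + (m + 1) := by
      rw [card_union_of_disjoint hx.disj, hx.card]
    have hU : A ∪ ran m x = univ := by
      by_contra hc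
      have := hAmax (A ∪ ran m x) (mem_filter.2 ⟨mem_univ _, by omega, hc, hx.str hAS⟩)
      omega
    have hm : 1 ≤ m := by
      by_contra hc
      obtain rfl : m = 0 := by omega
      refine not_str_erase h (x 0) ?_
      have : univ.erase (x 0) = A := by
        have hr : ran 0 x = {x 0} := by simp [ran]
        rw [← hU, hr, union_comm, ← insert_eq, erase_insert (hx.out 0 le_rfl)]
      rwa [this]
    have hac := ac_of_ear h hx hA2 hU
    have hF := edges_le hirr _ hac
    have hTc : (ran m x)ᶜ = A := by
      rw [compl_eq_comm, ← (IsCompl.of_eq (disjoint_iff.1 hx.disj) (by simpa using hU)).compl_eq]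
    rw [hTc] at hF
    have hin := hx.inner hirr
    have t1 := e_to_ear hx
    have t2 := e_from_ear hx
    rw [hU, hcU] at hcu
    rw [← hU, e_union_left hx.disj, e_union_right _ hx.disj, e_union_right _ hx.disj, hcu]
    generalize #A = a at *
    obtain ⟨a, rfl⟩ := Nat.exists_eq_add_of_le hA2
    obtain ⟨m, rfl⟩ := Nat.exists_eq_add_of_le hm
    rw [show 2 + a + (1 + m + 1) - 1 = a + m + 3 by omega]
    nlinarith [Nat.zero_le (a * m)]
  · -- the shortest cycle through any vertex is spanning, so all out-degrees are at most one
    push Not at hbig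
    have hdeg : ∀ v, #{u ∈ univ | G v u} ≤ 1 := by
      intro v
      obtain ⟨m, x, hx⟩ := hear {v} (singleton_nonempty v) (hsingU v)
      have hU : {v} ∪ ran m x = univ := by
        by_contra hc
        refine hbig _ ?_ hc (hx.str (hsing v))
        rw [card_union_of_disjoint hx.disj, hx.card, card_singleton]
        omega
      have key : ∀ u, G v u → u = x 0 := by
        intro u hu
        have := hU ▸ mem_univ u
        rcases mem_union.1 this with h' | h'
        · rw [mem_singleton.1 h'] at hu
          exact absurd hu (hirr v)
        · obtain ⟨i, hi, rfl⟩ := mem_ran.1 h'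
          rw [hx.start_only i hi v (mem_singleton_self v) hu]
      refine card_le_one.2 fun a ha b hb => ?_
      rw [key a (mem_filter.1 ha).2, key b (mem_filter.1 hb).2]
    have hE : e G univ univ ≤ Fintype.card V := by
      unfold e
      refine (sum_le_card_nsmul _ _ 1 fun v _ => hdeg v).trans ?_
      simp
    generalize Fintype.card V = n at *
    obtain ⟨k, rfl⟩ := Nat.exists_eq_add_of_le h4
    rw [show 4 + k - 1 = k + 3 by omega]
    nlinarith

end CritStrong

theorem stmt5 {V : Type*} [Fintype V] (G : V → V → Prop) (n : ℕ)
    (hn : Fintype.card V = n) (h4 : 4 ≤ n) (hirr : Irreflexive G)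
    (hcrit : Critical G) :
    edgeCount G ≤ n * (n - 1) / 2 - n + 4 := by
  subst hn
  have h := CritStrong.bound h4 hirr hcrit
  rw [← CritStrong.edgeCount_eq] at h
  omega
end

section
/- For n ≥ 4, the maximum number of directed edges in a vertex-critical strongly connected simple digraph on n vertices equals C(n,2) − n + 4. -/
/-! ### Induced subdigraphs, reachability and strong connectivity -/

namespace CritDigraph

open Finset
open scoped Classical

variable {V : Type*}

/-- Reachability by a directed path all of whose edges lie inside the vertex set `S`. -/
def Reach (G : V → V → Prop) (S : Finset V) : V → V → Prop :=
  Relation.ReflTransGen fun p q => p ∈ S ∧ q ∈ S ∧ G p q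

/-- The subdigraph of `G` induced on `S` is strongly connected (the empty one is). -/
def SC (G : V → V → Prop) (S : Finset V) : Prop :=
  ∀ a ∈ S, ∀ b ∈ S, Reach G S a b

/-- The non-critical vertices of `G[S]`: those whose deletion leaves `G[S]` strongly connected. -/
noncomputable def NC (G : V → V → Prop) (S : Finset V) : Finset V :=
  {z ∈ S | SC G (S.erase z)}

/-- Out-neighbours of `x` inside `S`. -/
noncomputable def outN (G : V → V → Prop) (S : Finset V) (x : V) : Finset V :=
  {y ∈ S | G x y}

/-- In-neighbours of `x` inside `S`. -/
noncomputable def inN (G : V → V → Prop) (S : Finset V) (x : V) : Finset V :=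
  {y ∈ S | G y x}

/-- The number of edges of `G[S]`. -/
noncomputable def E (G : V → V → Prop) (S : Finset V) : ℕ :=
  ∑ x ∈ S, #(outN G S x)

variable {G : V → V → Prop} {S T : Finset V}

lemma Reach.mono (h : S ⊆ T) {a b : V} (hab : Reach G S a b) : Reach G T a b :=
  Relation.ReflTransGen.mono (fun _ _ h' => ⟨h h'.1, h h'.2.1, h'.2.2⟩) _ _ hab

lemma Reach.flip {a b : V} (h : Reach G S a b) : Reach (flip G) S b a := by
  induction h with
  | refl => exact .refl
  | tail _ h ih => exact Relation.ReflTransGen.head ⟨h.2.1, h.1, h.2.2⟩ ih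

lemma SC.flip (h : SC G S) : SC (flip G) S := fun a ha b hb => (h b hb a ha).flip

lemma sc_flip : SC (flip G) S ↔ SC G S := ⟨fun h => h.flip, fun h => h.flip⟩

lemma reach_of_notMem {a b : V} (h : Reach G S a b) (ha : a ∉ S) : b = a := by
  rcases Relation.ReflTransGen.cases_head h with h | ⟨c, h, -⟩
  · exact h.symm
  · exact absurd h.1 ha

lemma SC.exists_out (h : SC G S) {x y : V} (hx : x ∈ S) (hy : y ∈ S) (hxy : y ≠ x) :
    ∃ z ∈ S, G x z := by
  rcases Relation.ReflTransGen.cases_head (h x hx y hy) with h | ⟨c, h, -⟩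
  · exact absurd h.symm hxy
  · exact ⟨c, h.2.1, h.2.2⟩

lemma SC.exists_in (h : SC G S) {x y : V} (hx : x ∈ S) (hy : y ∈ S) (hxy : y ≠ x) :
    ∃ z ∈ S, G z x := h.flip.exists_out hx hy hxy

/-- A new vertex with an edge to and an edge from a set of mutually reachable vertices
is absorbed by it. -/
lemma sc_of_core {x y z : V} (hT : ∀ a ∈ T, ∀ b ∈ T, Reach G S a b)
    (hS : ∀ a ∈ S, a = x ∨ a ∈ T) (hTS : T ⊆ S) (hx : x ∈ S)
    (hy : y ∈ T) (hxy : G x y) (hz : z ∈ T) (hzx : G z x) : SC G S := by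
  have h1 : Reach G S x y := .single ⟨hx, hTS hy, hxy⟩
  have h2 : Reach G S z x := .single ⟨hTS hz, hx, hzx⟩
  intro a ha b hb
  rcases hS a ha with rfl | ha <;> rcases hS b hb with rfl | hb
  · exact .refl
  · exact h1.trans (hT _ hy _ hb)
  · exact (hT _ ha _ hz).trans h2
  · exact hT _ ha _ hb

lemma sc_of_erase {x y z : V} (hT : SC G (S.erase x)) (hx : x ∈ S)
    (hy : y ∈ S.erase x) (hxy : G x y) (hz : z ∈ S.erase x) (hzx : G z x) : SC G S :=
  sc_of_core (T := S.erase x) (fun a ha b hb => (hT a ha b hb).mono (erase_subset _ _))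
    (fun a ha => by by_cases h : a = x <;> simp [h, ha]) (erase_subset _ _) hx hy hxy hz hzx

/-! ### Counting edges -/

lemma E_eq_in : E G S = ∑ x ∈ S, #(inN G S x) := by
  simp only [E, outN, inN, card_filter]
  exact sum_comm

lemma E_erase (hirr : ∀ a, ¬ G a a) {x : V} (hx : x ∈ S) :
    E G S = E G (S.erase x) + #(outN G S x) + #(inN G S x) := by
  obtain ⟨T, hxT, rfl⟩ : ∃ T, x ∉ T ∧ insert x T = S := ⟨S.erase x, by simp, insert_erase hx⟩
  simp only [E, outN, inN, card_filter, sum_insert hxT, erase_insert hxT, sum_add_distrib,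
    hirr, if_false]
  omega

lemma card_out_le (hirr : ∀ a, ¬ G a a) {x : V} (hx : x ∈ S) : #(outN G S x) + 1 ≤ #S := by
  have : outN G S x ⊆ S.erase x := by
    intro y hy
    simp only [outN, mem_filter] at hy
    refine mem_erase.2 ⟨?_, hy.1⟩
    rintro rfl
    exact hirr _ hy.2
  have h := card_le_card this
  rw [card_erase_of_mem hx] at h
  have := card_pos.2 ⟨x, hx⟩
  omega

lemma card_in_le (hirr : ∀ a, ¬ G a a) {x : V} (hx : x ∈ S) : #(inN G S x) + 1 ≤ #S :=
  card_out_le (G := flip G) hirr hx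

/-! ### The degree bound -/

/-- A breadth-first spanning out-tree rooted at `x`, given by its parent function. -/
lemma exists_tree (h : SC G S) {x : V} (hx : x ∈ S) :
    ∃ (π : V → V) (d : V → ℕ), ∀ p ∈ S, p ≠ x →
      π p ∈ S ∧ G (π p) p ∧ d (π p) < d p ∧ (G x p → π p = x) := by
  let L : ℕ → V → Prop := fun k => Nat.rec (fun p => p = x)
    (fun _ f p => ∃ q ∈ S, f q ∧ G q p) k
  have hL : ∀ p ∈ S, ∃ k, L k p := by
    intro p hp
    have := h x hx p hp
    clear hp
    induction this with
    | refl => exact ⟨0, rfl⟩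
    | tail _ h ih =>
      obtain ⟨k, hk⟩ := ih
      exact ⟨k + 1, _, h.1, hk, h.2.2⟩
  let d : V → ℕ := fun p => sInf {k | L k p}
  have hd : ∀ p k, L k p → d p ≤ k := fun p k hk => Nat.sInf_le hk
  have hd' : ∀ p ∈ S, L (d p) p := fun p hp => Nat.sInf_mem (hL p hp)
  have key : ∀ p, ∃ q, p ∈ S → p ≠ x → q ∈ S ∧ G q p ∧ d q < d p ∧ (G x p → q = x) := by
    intro p
    by_cases hp : p ∈ S ∧ p ≠ x
    swap
    · exact ⟨p, fun h1 h2 => absurd ⟨h1, h2⟩ hp⟩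
    obtain ⟨hp, hpx⟩ := hp
    have hdp := hd' p hp
    rcases hk : d p with _ | k
    · rw [hk] at hdp
      exact absurd hdp hpx
    rw [hk] at hdp
    by_cases hG : G x p
    · refine ⟨x, fun _ _ => ⟨hx, hG, ?_, fun _ => rfl⟩⟩
      have := hd x 0 rfl
      omega
    · obtain ⟨q, hq, hqk, hqp⟩ := hdp
      refine ⟨q, fun _ _ => ⟨hq, hqp, ?_, fun h => absurd h hG⟩⟩
      have := hd q k hqk
      omega
  choose π hπ using key
  exact ⟨π, d, hπ⟩

/-- The vertices `w ≠ x` whose deletion cuts some vertex off from `x` are inner vertices of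
the breadth-first tree of `x`; the children of inner vertices other than the root are not
out-neighbours of `x`, so there are at most as many such `w` as non-out-neighbours. -/
lemma card_cut_add_out (hirr : ∀ a, ¬ G a a) (h : SC G S) {x : V} (hx : x ∈ S) :
    #{w ∈ S.erase x | ∃ p ∈ S.erase w, ¬ Reach G (S.erase w) x p} + #(outN G S x) + 1 ≤ #S := by
  obtain ⟨π, d, hπ⟩ := exists_tree h hx
  let P := {p ∈ S.erase x | ¬ G x p}
  have h1 : {w ∈ S.erase x | ∃ p ∈ S.erase w, ¬ Reach G (S.erase w) x p} ⊆ P.image π := by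
    intro w hw
    simp only [mem_filter, mem_erase] at hw
    obtain ⟨⟨hwx, hwS⟩, p, ⟨hpw, hpS⟩, hp⟩ := hw
    by_contra hcon
    apply hp
    have hne : ∀ q ∈ S, q ≠ x → π q ≠ w := by
      intro q hq hqx hqw
      apply hcon
      refine mem_image.2 ⟨q, ?_, hqw⟩
      simp only [P, mem_filter, mem_erase]
      refine ⟨⟨hqx, hq⟩, fun hG => hwx ?_⟩
      rw [← hqw]
      exact (hπ q hq hqx).2.2.2 hG
    clear hp
    induction hk : d p using Nat.strong_induction_on generalizing p with
    | _ k ih =>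
      by_cases hpx : p = x
      · subst hpx; exact .refl
      obtain ⟨h1, h2, h3, -⟩ := hπ p hpS hpx
      have h4 := hne p hpS hpx
      exact (ih _ (hk ▸ h3) (π p) h4 h1 rfl).tail
        ⟨mem_erase.2 ⟨h4, h1⟩, mem_erase.2 ⟨hpw, hpS⟩, h2⟩
  have h2 := (card_le_card h1).trans card_image_le
  have h3 : #P + #(outN G S x) = #(S.erase x) := by
    have : outN G S x = {p ∈ S.erase x | G x p} := by
      ext p
      simp only [outN, mem_filter, mem_erase]
      refine ⟨fun h => ⟨⟨?_, h.1⟩, h.2⟩, fun h => ⟨h.1.2, h.2⟩⟩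
      rintro rfl
      exact hirr _ h.2
    rw [this, add_comm]
    exact card_filter_add_card_filter_not _
  rw [card_erase_of_mem hx] at h3
  have := card_pos.2 ⟨x, hx⟩
  omega

/-- The degree of `x` plus the number of critical vertices other than `x` is at most `2(n-1)`. -/
lemma degree_bound (hirr : ∀ a, ¬ G a a) (h : SC G S) {x : V} (hx : x ∈ S) :
    #((S \ NC G S).erase x) + #(outN G S x) + #(inN G S x) + 2 ≤ 2 * #S := by
  have h1 := card_cut_add_out hirr h hx
  have h2 := card_cut_add_out (G := flip G) hirr h.flip hx
  have h3 : outN (flip G) S x = inN G S x := rfl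
  rw [h3] at h2
  have h4 : (S \ NC G S).erase x ⊆
      {w ∈ S.erase x | ∃ p ∈ S.erase w, ¬ Reach G (S.erase w) x p} ∪
      {w ∈ S.erase x | ∃ p ∈ S.erase w, ¬ Reach (flip G) (S.erase w) x p} := by
    intro w hw
    simp only [NC, mem_erase, mem_sdiff, mem_filter, not_and] at hw
    obtain ⟨hwx, hwS, hw⟩ := hw
    have hw := hw hwS
    by_contra hcon
    simp only [mem_union, mem_filter, mem_erase, not_or, not_and, not_exists, not_not] at hcon
    apply hw
    intro a ha b hb
    rw [mem_erase] at ha hb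
    exact (Reach.flip (hcon.2 ⟨hwx, hwS⟩ a ha)).trans (hcon.1 ⟨hwx, hwS⟩ b hb)
  have h5 := (card_le_card h4).trans (card_union_le _ _)
  omega

lemma NC_subset : NC G S ⊆ S := filter_subset _ _

lemma degree_bound_critical (hirr : ∀ a, ¬ G a a) (h : SC G S) (hN : NC G S = ∅) {x : V}
    (hx : x ∈ S) : #(outN G S x) + #(inN G S x) + 1 ≤ #S := by
  have := degree_bound hirr h hx
  rw [hN, sdiff_empty, card_erase_of_mem hx] at this
  have := card_pos.2 ⟨x, hx⟩
  omega

lemma E_critical (hirr : ∀ a, ¬ G a a) (h : SC G S) (hN : NC G S = ∅) :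
    2 * E G S ≤ #S * (#S - 1) := by
  have h1 : 2 * E G S = ∑ x ∈ S, (#(outN G S x) + #(inN G S x)) := by
    rw [sum_add_distrib, ← E_eq_in, two_mul, E]
  rw [h1]
  refine sum_le_card_nsmul _ _ _ fun x hx => ?_
  have := degree_bound_critical hirr h hN hx
  omega

/-! ### Digraphs with few non-critical vertices -/

/-- Deleting a non-critical vertex `x` can create new non-critical vertices only at a unique
out-neighbour or a unique in-neighbour of `x`. -/
lemma NC_erase_subset {x : V} (hx : x ∈ S) (hirr : ∀ a, ¬ G a a) {z : V}
    (hz : z ∈ NC G (S.erase x)) :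
    z ∈ (NC G S).erase x ∨ outN G S x ⊆ {z} ∨ inN G S x ⊆ {z} := by
  simp only [NC, mem_filter, mem_erase] at hz
  obtain ⟨⟨hzx, hzS⟩, hz⟩ := hz
  by_contra! hcon
  obtain ⟨h1, h2, h3⟩ := hcon
  obtain ⟨y, hy, hyz⟩ := not_subset.1 h2
  obtain ⟨y', hy', hyz'⟩ := not_subset.1 h3
  simp only [outN, inN, mem_filter, mem_singleton] at hy hy' hyz hyz'
  apply h1
  simp only [NC, mem_erase, mem_filter]
  refine ⟨hzx, hzS, ?_⟩
  rw [erase_right_comm] at hz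
  refine sc_of_erase hz (mem_erase.2 ⟨hzx.symm, hx⟩) (y := y) (z := y') ?_ hy.2 ?_ hy'.2
  · refine mem_erase.2 ⟨?_, mem_erase.2 ⟨hyz, hy.1⟩⟩
    rintro rfl
    exact hirr _ hy.2
  · refine mem_erase.2 ⟨?_, mem_erase.2 ⟨hyz', hy'.1⟩⟩
    rintro rfl
    exact hirr _ hy'.2

lemma E_le (hirr : ∀ a, ¬ G a a) : E G S ≤ #S * (#S - 1) := by
  refine sum_le_card_nsmul _ _ _ fun x hx => ?_
  have := card_out_le hirr hx
  omega

lemma card_NC_erase (hirr : ∀ a, ¬ G a a) {x : V} (hx : x ∈ NC G S)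
    (ho : 1 ≤ #(outN G S x)) (hi : 1 ≤ #(inN G S x)) :
    #(NC G (S.erase x)) + 1 ≤ #(NC G S) + (if #(outN G S x) = 1 then 1 else 0)
      + (if #(inN G S x) = 1 then 1 else 0) := by
  let A : Finset V := if #(outN G S x) = 1 then outN G S x else ∅
  let B : Finset V := if #(inN G S x) = 1 then inN G S x else ∅
  have hA : #A = if #(outN G S x) = 1 then 1 else 0 := by
    simp only [A]; split_ifs with h <;> simp [h]
  have hB : #B = if #(inN G S x) = 1 then 1 else 0 := by
    simp only [B]; split_ifs with h <;> simp [h]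
  have one : ∀ (U : Finset V) (z : V), 1 ≤ #U → U ⊆ {z} → #U = 1 ∧ z ∈ U := by
    intro U z hU hUz
    have : U = {z} := by
      rcases subset_singleton_iff.1 hUz with h | h
      · simp [h] at hU
      · exact h
    simp [this]
  have hsub : NC G (S.erase x) ⊆ (NC G S).erase x ∪ A ∪ B := by
    intro z hz
    rcases NC_erase_subset (NC_subset hx) hirr hz with h | h | h
    · exact mem_union_left _ (mem_union_left _ h)
    · have := one _ _ ho h
      exact mem_union_left _ (mem_union_right _ (by simp only [A, if_pos this.1]; exact this.2))
    · have := one _ _ hi h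
      exact mem_union_right _ (by simp only [B, if_pos this.1]; exact this.2)
  have h1 := card_le_card hsub
  have h2 := card_union_le ((NC G S).erase x ∪ A) B
  have h3 := card_union_le ((NC G S).erase x) A
  rw [card_erase_of_mem hx] at h3
  have := card_pos.2 ⟨x, hx⟩
  omega

/-- The edge bound in terms of the number `k` of non-critical vertices, by induction on the
number of vertices: a non-critical vertex can be deleted, at the price of at most one new
non-critical vertex for each of its two degrees that equals `1`. -/
theorem E_le_of_NC (hirr : ∀ a, ¬ G a a) (h : SC G S) (hne : S.Nonempty) :
    2 * E G S ≤ #S * (#S - 1) + max 2 (2 * (#(NC G S) - 1) * (#S - 1)) := by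
  induction hn : #S generalizing S with
  | zero => simp [card_eq_zero.1 hn] at hne
  | succ m ih =>
    rcases Nat.lt_or_ge m 2 with hm | hm
    · have h1 := E_le (S := S) hirr
      rw [hn] at h1
      have h2 := le_max_left 2 (2 * (#(NC G S) - 1) * (m + 1 - 1))
      interval_cases m <;> simp_all
      omega
    by_cases hN : NC G S = ∅
    · have := E_critical hirr h hN
      rw [hn] at this
      omega
    obtain ⟨x, hxN⟩ := nonempty_iff_ne_empty.2 hN
    have hx := NC_subset hxN
    have hcT : #(S.erase x) = m := by rw [card_erase_of_mem hx, hn]; rfl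
    obtain ⟨y, hy⟩ : (S.erase x).Nonempty := card_pos.1 (by omega)
    have hSCT : SC G (S.erase x) := (mem_filter.1 hxN).2
    have ih := ih hSCT ⟨y, hy⟩ hcT
    rw [mem_erase] at hy
    have hE := E_erase hirr hx
    have ho : 1 ≤ #(outN G S x) := by
      obtain ⟨z, hz, hz'⟩ := h.exists_out hx hy.2 hy.1
      exact card_pos.2 ⟨z, mem_filter.2 ⟨hz, hz'⟩⟩
    have hi : 1 ≤ #(inN G S x) := by
      obtain ⟨z, hz, hz'⟩ := h.exists_in hx hy.2 hy.1
      exact card_pos.2 ⟨z, mem_filter.2 ⟨hz, hz'⟩⟩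
    have hj := card_NC_erase hirr hxN ho hi
    have hD := degree_bound hirr h hx
    have hcrit : #((S \ NC G S).erase x) + #(NC G S) = m + 1 := by
      rw [erase_eq_of_notMem (by simp [hxN]), ← hn]
      exact card_sdiff_add_card_eq_card NC_subset
    have ho' := card_out_le hirr hx
    have hi' := card_in_le hirr hx
    have hk : 1 ≤ #(NC G S) := card_pos.2 ⟨x, hxN⟩
    rw [hE]
    rw [hn] at hD ho' hi'
    generalize #(NC G (S.erase x)) = j at *
    generalize #(NC G S) = k at *
    generalize #(outN G S x) = o at *
    generalize #(inN G S x) = i at *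
    generalize E G (S.erase x) = e at *
    generalize #((S \ NC G S).erase x) = c at *
    clear hE hN hxN hSCT
    obtain ⟨k, rfl⟩ : ∃ k', k = k' + 1 := ⟨k - 1, by omega⟩
    obtain ⟨m, rfl⟩ : ∃ m', m = m' + 1 := ⟨m - 1, by omega⟩
    simp only [Nat.add_sub_cancel] at *
    have hb : max 2 (2 * (j - 1) * m) + 2 * (o + i) ≤ 2 * (m + 1) + max 2 (2 * k * (m + 1)) := by
      rcases Nat.eq_zero_or_pos k with rfl | hk0
      · have : j ≤ 2 := by split_ifs at hj <;> omega
        rw [max_eq_left (a := 2) (b := 2 * 0 * (m + 1)) (by simp)]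
        interval_cases j <;> simp <;> split_ifs at hj <;> omega
      · refine le_trans ?_ (Nat.add_le_add_left (le_max_right _ _) _)
        have hkm : k ≤ k * m := Nat.le_mul_of_pos_right _ (by omega)
        have hkm' : m ≤ k * m := Nat.le_mul_of_pos_left _ (by omega)
        have hjk : ∀ t, j - 1 ≤ t → 2 * (j - 1) * m ≤ 2 * t * m :=
          fun t ht => Nat.mul_le_mul_right _ (Nat.mul_le_mul_left _ ht)
        rcases le_total 2 (2 * (j - 1) * m) with h2 | h2
        · rw [max_eq_right h2]
          split_ifs at hj
          · have := hjk (k + 1) (by omega); nlinarith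
          · have := hjk k (by omega); nlinarith
          · have := hjk k (by omega); nlinarith
          · obtain ⟨k, rfl⟩ : ∃ k', k = k' + 1 := ⟨k - 1, by omega⟩
            have := hjk k (by omega); nlinarith
        · rw [max_eq_left h2]
          nlinarith
    have : (m + 1 + 1) * (m + 1) = (m + 1) * m + 2 * (m + 1) := by ring
    omega

/-! ### A vertex of in-degree one -/

/-- The vertices other than `a` that cannot be reached from the root `r` once `a` is deleted,
i.e. the vertices properly dominated by `a`. For `a = r` these are all vertices other than `r`. -/
noncomputable def Dom (G : V → V → Prop) (S : Finset V) (r a : V) : Finset V :=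
  {u ∈ S.erase a | ¬ Reach G (S.erase a) r u}

lemma reach_avoid_or {r w : V} (u : V) (h : Reach G T r w) :
    Reach G (T.erase u) r w ∨ Reach G T r u := by
  induction h with
  | refl => exact Or.inl .refl
  | @tail p w hp h ih =>
    rcases ih with ih | ih
    · by_cases hpu : p = u
      · exact Or.inr (hpu ▸ hp)
      by_cases hwu : w = u
      · subst hwu; exact Or.inr (hp.tail h)
      · exact Or.inl (ih.tail ⟨mem_erase.2 ⟨hpu, h.1⟩, mem_erase.2 ⟨hwu, h.2.1⟩, h.2.2⟩)
    · exact Or.inr ih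

/-- Of two vertices one is met first on the way from `r`. -/
lemma reach_first {r u a : V} (hua : u ≠ a) (h : Reach G S r u) :
    Reach G (S.erase a) r u ∨ Reach G (S.erase u) r a := by
  suffices H : ∀ w, Reach G S r w → (Reach G (S.erase a) r u ∨ Reach G (S.erase u) r a) ∨
      (Reach G ((S.erase a).erase u) r w ∧ w ≠ a ∧ w ≠ u) by
    rcases H u h with h | h
    · exact h
    · exact absurd rfl h.2.2
  intro w hw
  induction hw with
  | refl =>
    by_cases h1 : r = a
    · subst h1; exact Or.inl (Or.inr .refl)
    by_cases h2 : r = u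
    · subst h2; exact Or.inl (Or.inl .refl)
    exact Or.inr ⟨.refl, h1, h2⟩
  | @tail p w _ h ih =>
    rcases ih with ih | ⟨ih, hpa, hpu⟩
    · exact Or.inl ih
    have ih1 : Reach G (S.erase a) r p := ih.mono (erase_subset _ _)
    have ih2 : Reach G (S.erase u) r p := by
      rw [erase_right_comm] at ih; exact ih.mono (erase_subset _ _)
    obtain ⟨hp, hw, hG⟩ := h
    by_cases h1 : w = a
    · subst h1
      exact Or.inl (Or.inr (ih2.tail
        ⟨mem_erase.2 ⟨hpu, hp⟩, mem_erase.2 ⟨hua.symm, hw⟩, hG⟩))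
    by_cases h2 : w = u
    · subst h2
      exact Or.inl (Or.inl (ih1.tail ⟨mem_erase.2 ⟨hpa, hp⟩, mem_erase.2 ⟨hua, hw⟩, hG⟩))
    refine Or.inr ⟨ih.tail ⟨?_, ?_, hG⟩, h1, h2⟩ <;> simp [*]

lemma Dom_ssubset (h : SC G S) {r a u : V} (hr : r ∈ S) (hu : u ∈ Dom G S r a) :
    Dom G S r u ⊂ Dom G S r a := by
  have hu0 := hu
  simp only [Dom, mem_filter, mem_erase] at hu
  obtain ⟨⟨hua, huS⟩, hu⟩ := hu
  refine ⟨fun w hw => ?_, fun hsub => ?_⟩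
  · simp only [Dom, mem_filter, mem_erase] at hw ⊢
    obtain ⟨⟨hwu, hwS⟩, hw⟩ := hw
    refine ⟨⟨?_, hwS⟩, fun hcon => ?_⟩
    · rintro rfl
      rcases reach_first hua (h r hr u huS) with h | h
      · exact hu h
      · exact hw h
    · rcases reach_avoid_or u hcon with h | h
      · apply hw
        rw [erase_right_comm] at h
        exact h.mono (erase_subset _ _)
      · exact hu h
  · have := hsub hu0
    simp [Dom] at this

/-- The set dominated by `a` can be entered only from `a`. -/
lemma Dom_enter {r a p q : V} (hp : p ∈ S) (hpq : G p q) (hpA : p ∉ Dom G S r a)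
    (hq : q ∈ Dom G S r a) : p = a := by
  by_contra hpa
  simp only [Dom, mem_filter, mem_erase, not_and, not_not] at hpA hq
  exact hq.2 ((hpA ⟨hpa, hp⟩).tail ⟨mem_erase.2 ⟨hpa, hp⟩, mem_erase.2 hq.1, hpq⟩)

/-- If `A` can be entered only from `a`, a path from outside `A` into `A` ends with a path
from `a`. -/
lemma reach_suffix {A : Finset V} {a r y : V}
    (hA : ∀ p ∈ T, ∀ q, G p q → p ∉ A → q ∈ A → p = a) (hr : r ∉ A)
    (h : Reach G T r y) : y ∉ A ∨ Reach G T a y := by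
  induction h with
  | refl => exact Or.inl hr
  | @tail p y _ h ih =>
    rcases ih with ih | ih
    · by_cases hy : y ∈ A
      · obtain rfl := hA p h.1 y h.2.2 ih hy
        exact Or.inr (.single h)
      · exact Or.inl hy
    · exact Or.inr (ih.tail h)

/-- If `A` can be entered only from `a`, a path starting outside `A` either meets `a` before any
given `u ∈ A`, or never enters `A`. -/
lemma reach_prefix {A : Finset V} {a u w y : V}
    (hA : ∀ p ∈ S, ∀ q, G p q → p ∉ A → q ∈ A → p = a) (hw : w ∉ A) (hu : u ∈ A)
    (h : Reach G S w y) : Reach G (S.erase u) w a ∨ (y ∉ A ∧ Reach G (S.erase u) w y) := by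
  induction h with
  | refl => exact Or.inr ⟨hw, .refl⟩
  | @tail p y _ h ih =>
    rcases ih with ih | ⟨hp, ih⟩
    · exact Or.inl ih
    by_cases hy : y ∈ A
    · obtain rfl := hA p h.1 y h.2.2 hp hy
      exact Or.inl ih
    · refine Or.inr ⟨hy, ih.tail ⟨mem_erase.2 ⟨?_, h.1⟩, mem_erase.2 ⟨?_, h.2.1⟩, h.2.2⟩⟩
      · rintro rfl; exact hp hu
      · rintro rfl; exact hy hu

/-- Every vertex-critical strongly connected digraph with at least two vertices has a vertex
of in-degree one. Fix a root `r` and let `a` dominate a smallest non-empty set `A`. No `u ∈ A`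
dominates anything, so by criticality `u` dominates something in the reversed digraph. Every such
`u` must lie on all paths from `a` to `r`, and two vertices of `A` cannot both do so. Hence
`A = {u}`, and `a` is the only in-neighbour of `u`. -/
lemma exists_in_one (hirr : ∀ a, ¬ G a a) (h : SC G S) (hN : NC G S = ∅) (hS : 2 ≤ #S) :
    ∃ u ∈ S, ∃ v ∈ S, inN G S u = {v} := by
  obtain ⟨r, hr⟩ : S.Nonempty := card_pos.1 (by omega)
  have hcrit : ∀ a ∈ S, (Dom G S r a).Nonempty ∨ (Dom (flip G) S r a).Nonempty := by
    intro a ha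
    by_contra! hcon
    obtain ⟨h1, h2⟩ := hcon
    have h1' : ∀ u ∈ S.erase a, Reach G (S.erase a) r u := by
      intro u hu
      by_contra hc
      have : u ∈ Dom G S r a := mem_filter.2 ⟨hu, hc⟩
      simp [h1] at this
    have h2' : ∀ u ∈ S.erase a, Reach (flip G) (S.erase a) r u := by
      intro u hu
      by_contra hc
      have : u ∈ Dom (flip G) S r a := mem_filter.2 ⟨hu, hc⟩
      simp [h2] at this
    have : a ∈ NC G S := mem_filter.2 ⟨ha, fun x hx y hy =>
      (Reach.flip (h2' x hx)).trans (h1' y hy)⟩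
    simp [hN] at this
  have hrne : (Dom G S r r).Nonempty := by
    obtain ⟨u, hu⟩ : (S.erase r).Nonempty := card_pos.1 (by rw [card_erase_of_mem hr]; omega)
    refine ⟨u, mem_filter.2 ⟨hu, fun hc => ?_⟩⟩
    exact (mem_erase.1 hu).1 (reach_of_notMem hc (notMem_erase _ _))
  obtain ⟨a, ha, hmin⟩ := exists_min_image {a ∈ S | (Dom G S r a).Nonempty}
    (fun a => #(Dom G S r a)) ⟨r, mem_filter.2 ⟨hr, hrne⟩⟩
  simp only [mem_filter] at ha hmin
  obtain ⟨haS, hane⟩ := ha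
  set A := Dom G S r a with hAdef
  have hAS : ∀ u ∈ A, u ∈ S := fun u hu => (mem_erase.1 (mem_filter.1 hu).1).2
  have hAa : a ∉ A := by simp [hAdef, Dom]
  have hAr : r ∉ A := by
    intro hc
    exact (mem_filter.1 hc).2 .refl
  have hA : ∀ p ∈ S, ∀ q, G p q → p ∉ A → q ∈ A → p = a :=
    fun p hp q hpq h1 h2 => Dom_enter hp hpq h1 h2
  have hleaf : ∀ u ∈ A, Dom G S r u = ∅ := by
    intro u hu
    by_contra hc
    exact absurd (hmin u ⟨hAS u hu, nonempty_iff_ne_empty.2 hc⟩)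
      (not_le.2 (card_lt_card (Dom_ssubset h hr hu)))
  have hback : ∀ u ∈ A, a ∈ Dom (flip G) S r u := by
    intro u hu
    induction hk : #(Dom (flip G) S r u) using Nat.strong_induction_on generalizing u with
    | _ k ih =>
      by_contra hcon
      have hau : a ≠ u := by rintro rfl; exact hAa hu
      have hRa : Reach (flip G) (S.erase u) r a := by
        by_contra hc
        exact hcon (mem_filter.2 ⟨mem_erase.2 ⟨hau, haS⟩, hc⟩)
      obtain ⟨w, hw⟩ : (Dom (flip G) S r u).Nonempty := by
        rcases hcrit u (hAS u hu) with h | h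
        · simp [hleaf u hu] at h
        · exact h
      have hw' := hw
      simp only [Dom, mem_filter, mem_erase] at hw'
      have hwA : w ∈ A := by
        by_contra hwA
        apply hw'.2
        rcases reach_prefix hA hwA hu (h w hw'.1.2 u (hAS u hu)) with h | h
        · exact hRa.trans h.flip
        · exact absurd hu h.1
      have hlt := Dom_ssubset h.flip hr hw
      exact hcon (hlt.1 (ih _ (hk ▸ card_lt_card hlt) w hwA rfl))
  obtain ⟨u, hu⟩ := hane
  have hkey : ∀ u₁ ∈ A, ∀ u₂ ∈ A, u₁ ≠ u₂ → u₂ ∈ Dom (flip G) S r u₁ := by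
    intro u₁ h₁ u₂ h₂ hne
    by_contra hcon
    have h3 : Reach (flip G) (S.erase u₁) r u₂ := by
      by_contra hc
      exact hcon (mem_filter.2 ⟨mem_erase.2 ⟨hne.symm, hAS _ h₂⟩, hc⟩)
    have h4 : Reach G (S.erase u₁) r u₂ := by
      by_contra hc
      have : u₂ ∈ Dom G S r u₁ := mem_filter.2 ⟨mem_erase.2 ⟨hne.symm, hAS _ h₂⟩, hc⟩
      simp [hleaf u₁ h₁] at this
    rcases reach_suffix (fun p hp => hA p (mem_erase.1 hp).2) hAr h4 with h5 | h5
    · exact h5 h₂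
    · exact (mem_filter.1 (hback u₁ h₁)).2 (h3.trans h5.flip)
  have huniq : ∀ w ∈ A, w = u := by
    intro w hw
    by_contra hne
    have h1 := Dom_ssubset h.flip hr (hkey u hu w hw (Ne.symm hne))
    have h2 := Dom_ssubset h.flip hr (hkey w hw u hu hne)
    exact absurd (h1.trans h2) (ssubset_irrefl _)
  refine ⟨u, hAS u hu, a, haS, ?_⟩
  have hsub : inN G S u ⊆ {a} := by
    intro p hp
    simp only [inN, mem_filter] at hp
    refine mem_singleton.2 (hA p hp.1 u hp.2 (fun hc => ?_) hu)
    exact hirr u (huniq p hc ▸ hp.2)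
  rcases subset_singleton_iff.1 hsub with h0 | h0
  · have hua : a ≠ u := by rintro rfl; exact hAa hu
    obtain ⟨z, hz, hzu⟩ := h.exists_in (hAS u hu) haS hua
    have : z ∈ inN G S u := mem_filter.2 ⟨hz, hzu⟩
    simp [h0] at this
  · exact h0

/-! ### Contracting the edge into a vertex of in-degree one -/

/-- Contraction of the edge `v → u` into `v`: the vertex `v` inherits the out-neighbours of `u`
(used when `v` is the only in-neighbour of `u`, and on vertex sets not containing `u`). -/
def Con (G : V → V → Prop) (v u : V) : V → V → Prop :=
  fun p q => G p q ∨ (p = v ∧ q ≠ v ∧ G u q)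

section Contraction

variable {u v : V}

lemma con_irrefl (hirr : ∀ a, ¬ G a a) : ∀ a, ¬ Con G v u a a := by
  rintro a (h | ⟨rfl, h, -⟩)
  · exact hirr a h
  · exact h rfl

lemma in_eq (hin : inN G S u = {v}) {p : V} (hp : p ∈ S) (h : G p u) : p = v := by
  have : p ∈ inN G S u := mem_filter.2 ⟨hp, h⟩
  rwa [hin, mem_singleton] at this

lemma con_sc (h : SC G S) (hv : v ∈ S) (hvu : v ≠ u) (hin : inN G S u = {v}) :
    SC (Con G v u) (S.erase u) := by
  let φ : V → V := fun p => if p = u then v else p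
  have hφ : ∀ p ∈ S, φ p ∈ S.erase u := by
    intro p hp
    simp only [φ]
    split_ifs with h1
    · exact mem_erase.2 ⟨hvu, hv⟩
    · exact mem_erase.2 ⟨h1, hp⟩
  have key : ∀ a b, Reach G S a b → Reach (Con G v u) (S.erase u) (φ a) (φ b) := by
    intro a b hab
    induction hab with
    | refl => exact .refl
    | @tail p q _ hpq ih =>
      obtain ⟨hp, hq, hG⟩ := hpq
      by_cases heq : φ p = φ q
      · rwa [← heq]
      refine ih.tail ⟨hφ p hp, hφ q hq, ?_⟩
      by_cases hqu : q = u
      · subst hqu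
        obtain rfl := in_eq hin hp hG
        simp [φ] at heq
      by_cases hpu : p = u
      · subst hpu
        simp only [φ, if_true, if_neg hqu] at heq ⊢
        exact Or.inr ⟨rfl, Ne.symm heq, hG⟩
      · simp only [φ, if_neg hqu, if_neg hpu]
        exact Or.inl hG
  intro a ha b hb
  have := key a b (h a (mem_erase.1 ha).2 b (mem_erase.1 hb).2)
  simpa only [φ, if_neg (mem_erase.1 ha).1, if_neg (mem_erase.1 hb).1] using this

/-- The edge `v → u`, the edge `u → v` if present, and one edge for each common out-neighbour of
`u` and `v` are lost in the contraction. -/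
lemma con_E (hirr : ∀ a, ¬ G a a) (hu : u ∈ S) (hv : v ∈ S) (hvu : v ≠ u)
    (hin : inN G S u = {v}) :
    E G S = E (Con G v u) (S.erase u) + 1 + (if G u v then 1 else 0)
      + #{q ∈ S.erase u | G v q ∧ G u q} := by
  have h1 := E_erase hirr hu
  have hvT : v ∈ S.erase u := mem_erase.2 ⟨hvu, hv⟩
  have h2 := E_erase hirr hvT
  have h3 := E_erase (con_irrefl (v := v) (u := u) hirr) hvT
  have h4 : E (Con G v u) ((S.erase u).erase v) = E G ((S.erase u).erase v) := by
    refine sum_congr rfl fun p hp => ?_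
    congr 1
    ext q
    simp [outN, Con, (mem_erase.1 hp).1]
  have h5 : inN (Con G v u) (S.erase u) v = inN G (S.erase u) v := by
    ext p; simp [inN, Con]
  have h6 : #(outN (Con G v u) (S.erase u) v) + #{q ∈ S.erase u | G v q ∧ G u q}
      + (if G u v then 1 else 0) = #(outN G (S.erase u) v) + #(outN G S u) := by
    obtain ⟨T, hvT', hT⟩ : ∃ T, v ∉ T ∧ insert v T = S.erase u :=
      ⟨(S.erase u).erase v, by simp, insert_erase hvT⟩
    have huT : u ∉ insert v T := by rw [hT]; simp
    have hS : S = insert u (insert v T) := by rw [hT, insert_erase hu]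
    rw [← hT, hS]
    simp only [outN, Con, card_filter, sum_insert hvT', sum_insert huT, hirr]
    have : ∀ q ∈ T, ((if G v q ∨ v = v ∧ q ≠ v ∧ G u q then 1 else 0) : ℕ) +
        (if G v q ∧ G u q then 1 else 0) =
        (if G v q then 1 else 0) + (if G u q then 1 else 0) := by
      intro q hq
      have : q ≠ v := by rintro rfl; exact hvT' hq
      by_cases h1 : G v q <;> by_cases h2 : G u q <;> simp [h1, h2, this]
    have := sum_congr rfl this
    rw [sum_add_distrib, sum_add_distrib] at this
    simp only [ne_eq, not_true_eq_false, false_and, and_false, or_false, if_false]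
    simp only [ne_eq] at this
    omega
  rw [hin, card_singleton] at h1
  rw [h4, h5] at h3
  omega

/-- For critical `G`, a vertex `z ≠ v` whose deletion leaves the contraction strongly connected
is the only possible out-neighbour of `u`: through any other one, `u` could be put back, and `z`
would be non-critical in `G`. -/
lemma con_crit (hN : NC G S = ∅) (hu : u ∈ S) (hv : v ∈ S) (hvu : v ≠ u)
    (hGvu : G v u) (hirr : ∀ a, ¬ G a a) {z : V} (hz : z ∈ S.erase u) (hzv : z ≠ v)
    (hsc : SC (Con G v u) ((S.erase u).erase z)) : outN G S u ⊆ {z} := by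
  by_contra hcon
  obtain ⟨y, hy, hyz⟩ := not_subset.1 hcon
  simp only [outN, mem_filter, mem_singleton] at hy hyz
  obtain ⟨hzu, hzS⟩ := mem_erase.1 hz
  have hyu : y ≠ u := by rintro rfl; exact hirr _ hy.2
  have huz : u ∈ S.erase z := mem_erase.2 ⟨hzu.symm, hu⟩
  have hvz : v ∈ S.erase z := mem_erase.2 ⟨hzv.symm, hv⟩
  have hsub : (S.erase u).erase z ⊆ S.erase z := by
    rw [erase_right_comm]; exact erase_subset _ _
  have hlift : ∀ a b, Reach (Con G v u) ((S.erase u).erase z) a b → Reach G (S.erase z) a b := by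
    intro a b hab
    induction hab with
    | refl => exact .refl
    | @tail p q _ hpq ih =>
      obtain ⟨hp, hq, hG⟩ := hpq
      rcases hG with hG | ⟨rfl, -, hG⟩
      · exact ih.tail ⟨hsub hp, hsub hq, hG⟩
      · exact (ih.tail ⟨hvz, huz, hGvu⟩).tail ⟨huz, hsub hq, hG⟩
  have : SC G (S.erase z) :=
    sc_of_core (T := (S.erase u).erase z) (x := u) (y := y) (z := v)
      (fun a ha b hb => hlift a b (hsc a ha b hb))
      (fun a ha => by
        by_cases h : a = u
        · exact Or.inl h
        · simp only [mem_erase] at ha ⊢; exact Or.inr ⟨ha.1, h, ha.2⟩)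
      hsub huz (by simp [hyz, hyu, hy.1]) hy.2 (by simp [hzv.symm, hvu, hv]) hGvu
  have : z ∈ NC G S := mem_filter.2 ⟨hzS, this⟩
  simp [hN] at this

/-- If the edge `v → u` is both the only edge out of `v` and the only edge into `u`, contracting
it loses at most two edges and leaves only the contracted vertex possibly non-critical. -/
lemma E_of_tight_edge (hirr : ∀ a, ¬ G a a) (h : SC G S) (hN : NC G S = ∅) (hu : u ∈ S)
    (hv : v ∈ S) (hvu : v ≠ u) (hin : inN G S u = {v}) (hout : outN G S v = {u})
    (hS : 4 ≤ #S) : 2 * E G S + 2 * #S ≤ #S * (#S - 1) + 8 := by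
  have hE := con_E hirr hu hv hvu hin
  have hsc := con_sc h hv hvu hin
  have hvT : v ∈ S.erase u := mem_erase.2 ⟨hvu, hv⟩
  have hcT : #(S.erase u) = #S - 1 := card_erase_of_mem hu
  have hGvu : G v u := by
    have : u ∈ outN G S v := by simp [hout]
    exact (mem_filter.1 this).2
  have houtv : ∀ q ∈ S, G v q → q = u := by
    intro q hq hG
    have : q ∈ outN G S v := mem_filter.2 ⟨hq, hG⟩
    rwa [hout, mem_singleton] at this
  have hc : #{q ∈ S.erase u | G v q ∧ G u q} = 0 := by
    rw [card_eq_zero, filter_eq_empty_iff]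
    intro q hq hG
    exact (mem_erase.1 hq).1 (houtv q (mem_erase.1 hq).2 hG.1)
  have hNC : #(NC (Con G v u) (S.erase u)) ≤ 1 := by
    suffices NC (Con G v u) (S.erase u) ⊆ {v} from (card_le_card this).trans (by simp)
    intro z hz
    obtain ⟨hz, hzsc⟩ := mem_filter.1 hz
    by_contra hzv
    rw [mem_singleton] at hzv
    have hsub := con_crit hN hu hv hvu hGvu hirr hz hzv hzsc
    have hvz : v ∈ (S.erase u).erase z := mem_erase.2 ⟨Ne.symm hzv, hvT⟩
    obtain ⟨w, hw⟩ : (((S.erase u).erase z).erase v).Nonempty := by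
      refine card_pos.1 ?_
      rw [card_erase_of_mem hvz, card_erase_of_mem hz, hcT]
      omega
    obtain ⟨q, hq, hG⟩ := hzsc.exists_out hvz (mem_erase.1 hw).2 (mem_erase.1 hw).1
    simp only [mem_erase] at hq
    rcases hG with hG | ⟨-, -, hG⟩
    · exact hq.2.1 (houtv q hq.2.2 hG)
    · have := hsub (mem_filter.2 ⟨hq.2.2, hG⟩)
      exact hq.1 (mem_singleton.1 this)
  have hb := E_le_of_NC (con_irrefl (v := v) (u := u) hirr) hsc ⟨v, hvT⟩
  have h0 : #(NC (Con G v u) (S.erase u)) - 1 = 0 := by omega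
  rw [h0, hcT] at hb
  simp only [Nat.mul_zero, Nat.zero_mul] at hb
  rw [max_eq_left (by omega)] at hb
  obtain ⟨m, hm⟩ : ∃ m, #S = m + 2 := ⟨#S - 2, by omega⟩
  rw [hm] at hb ⊢
  rw [hc] at hE
  simp only [Nat.add_sub_cancel, Nat.add_succ_sub_one] at hb ⊢
  have : (m + 2) * (m + 1) = (m + 1) * m + 2 * (m + 1) := by ring
  split_ifs at hE <;> omega

end Contraction

/-! ### The upper bound -/

/-- Induction on the number of vertices: contract the edge `v → u` into a vertex `u` of
in-degree one. The result is again critical unless `v → u`, or an edge `u → z`, satisfies the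
hypotheses of `E_of_tight_edge`; the loss is controlled by the degree bound at `v`. -/
theorem upper_bound (hirr : ∀ a, ¬ G a a) (h : SC G S) (hN : NC G S = ∅) (hS : 3 ≤ #S) :
    2 * E G S + 2 * #S ≤ #S * (#S - 1) + 8 := by
  induction hn : #S using Nat.strong_induction_on generalizing G S with
  | _ n ih =>
  rcases Nat.lt_or_ge n 4 with hn4 | hn4
  · have := E_critical hirr h hN
    have : n = 3 := by omega
    simp_all
    omega
  obtain ⟨u, hu, v, hv, hin⟩ := exists_in_one hirr h hN (by omega)
  have hGvu : G v u := by
    have : v ∈ inN G S u := by simp [hin]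
    exact (mem_filter.1 this).2
  have hvu : v ≠ u := by rintro rfl; exact hirr _ hGvu
  have hvT : v ∈ S.erase u := mem_erase.2 ⟨hvu, hv⟩
  have hcT : #(S.erase u) = n - 1 := by rw [card_erase_of_mem hu, hn]
  have hsc := con_sc h hv hvu hin
  have hcritu : ¬ SC G (S.erase u) := by
    intro hc
    have : u ∈ NC G S := mem_filter.2 ⟨hu, hc⟩
    simp [hN] at this
  -- `v` keeps an in-neighbour other than `u`, as otherwise nothing could enter `{u, v}`
  obtain ⟨p, hp, hpv⟩ : ∃ p ∈ S.erase u, G p v := by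
    obtain ⟨w, hw⟩ : ((S.erase u).erase v).Nonempty := by
      refine card_pos.1 ?_
      rw [card_erase_of_mem hvT, hcT]
      omega
    obtain ⟨p, hp, hpG⟩ := hsc.exists_in hvT (mem_erase.1 hw).2 (mem_erase.1 hw).1
    rcases hpG with hpG | ⟨-, hne, -⟩
    · exact ⟨p, hp, hpG⟩
    · exact absurd rfl hne
  by_cases htight : outN G S v = {u}
  · rw [← hn]
    exact E_of_tight_edge hirr h hN hu hv hvu hin htight (by omega)
  by_cases htight' : ∃ z ∈ S, z ≠ u ∧ outN G S u = {z} ∧ inN G S z = {u}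
  · obtain ⟨z, hz, hzu, ho, hi⟩ := htight'
    rw [← hn]
    exact E_of_tight_edge hirr h hN hz hu hzu.symm hi ho (by omega)
  have hNC : NC (Con G v u) (S.erase u) = ∅ := by
    rw [eq_empty_iff_forall_notMem]
    intro z hzN
    obtain ⟨hz, hzsc⟩ := mem_filter.1 hzN
    by_cases hzv : z = v
    · subst hzv
      have hsc' : SC G ((S.erase u).erase z) := by
        intro a ha b hb
        refine Relation.ReflTransGen.mono (fun p q hpq => ⟨hpq.1, hpq.2.1, ?_⟩) _ _
          (hzsc a ha b hb)
        rcases hpq.2.2 with h | ⟨rfl, -⟩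
        · exact h
        · exact absurd rfl (mem_erase.1 hpq.1).1
      have hpz : p ≠ z := by rintro rfl; exact hirr _ hpv
      obtain ⟨q, hq, hqu⟩ : ∃ q ∈ outN G S z, q ≠ u := by
        by_contra! hcon
        apply htight
        refine (subset_singleton_iff.1 fun q hq => mem_singleton.2 (hcon q hq)).resolve_left ?_
        exact nonempty_iff_ne_empty.1 ⟨u, mem_filter.2 ⟨hu, hGvu⟩⟩
      have hq' := mem_filter.1 hq
      have hqz : q ≠ z := by rintro rfl; exact hirr _ hq'.2
      exact hcritu (sc_of_erase hsc' hz (mem_erase.2 ⟨hqz, mem_erase.2 ⟨hqu, hq'.1⟩⟩) hq'.2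
        (mem_erase.2 ⟨hpz, hp⟩) hpv)
    · have hsub := con_crit hN hu hv hvu hGvu hirr hz hzv hzsc
      obtain ⟨hzu, hzS⟩ := mem_erase.1 hz
      have hout : outN G S u = {z} := by
        refine (subset_singleton_iff.1 hsub).resolve_left ?_
        obtain ⟨q, hq, hqG⟩ := h.exists_out hu hv hvu
        exact nonempty_iff_ne_empty.1 ⟨q, mem_filter.2 ⟨hq, hqG⟩⟩
      have hGuz : G u z := by
        have : z ∈ outN G S u := by simp [hout]
        exact (mem_filter.1 this).2
      have hsc' : SC G ((S.erase u).erase z) := by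
        intro a ha b hb
        refine Relation.ReflTransGen.mono (fun p q hpq => ⟨hpq.1, hpq.2.1, ?_⟩) _ _
          (hzsc a ha b hb)
        rcases hpq.2.2 with h | ⟨-, -, hG⟩
        · exact h
        · have hq := hpq.2.1
          simp only [mem_erase] at hq
          exact absurd (mem_singleton.1 (hsub (mem_filter.2 ⟨hq.2.2, hG⟩))) hq.1
      obtain ⟨q, hq, hqG⟩ := h.exists_out hzS hu hzu.symm
      have hqu : q ≠ u := by
        rintro rfl
        exact hzv (in_eq hin hzS hqG)
      have hqz : q ≠ z := by rintro rfl; exact hirr _ hqG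
      obtain ⟨q', hq', hqu'⟩ : ∃ q' ∈ inN G S z, q' ≠ u := by
        by_contra! hcon
        apply htight'
        refine ⟨z, hzS, hzu, hout, ?_⟩
        refine (subset_singleton_iff.1 fun q hq => mem_singleton.2 (hcon q hq)).resolve_left ?_
        exact nonempty_iff_ne_empty.1 ⟨u, mem_filter.2 ⟨hu, hGuz⟩⟩
      have hq'' := mem_filter.1 hq'
      have hqz' : q' ≠ z := by rintro rfl; exact hirr _ hq''.2
      exact hcritu (sc_of_erase hsc' hz (mem_erase.2 ⟨hqz, mem_erase.2 ⟨hqu, hq⟩⟩) hqG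
        (mem_erase.2 ⟨hqz', mem_erase.2 ⟨hqu', hq''.1⟩⟩) hq''.2)
  have hE := con_E hirr hu hv hvu hin
  have hb := ih (n - 1) (by omega) (con_irrefl (v := v) (u := u) hirr) hsc hNC (by omega) hcT
  -- the degree bound at `v` leaves room for the loss: `u` is an out-neighbour that is not
  -- common, and `p` is an in-neighbour other than `u`
  have hdeg := degree_bound_critical hirr h hN hv
  have ho : #{q ∈ S.erase u | G v q ∧ G u q} + 1 ≤ #(outN G S v) := by
    rw [← card_insert_of_notMem (a := u) (by simp)]
    refine card_le_card fun q hq => ?_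
    simp only [mem_insert, mem_filter, mem_erase] at hq
    rcases hq with rfl | hq
    · exact mem_filter.2 ⟨hu, hGvu⟩
    · exact mem_filter.2 ⟨hq.1.2, hq.2.1⟩
  have hi : 1 + (if G u v then 1 else 0) ≤ #(inN G S v) := by
    have hpu := (mem_erase.1 hp).1
    have hpm : p ∈ inN G S v := mem_filter.2 ⟨(mem_erase.1 hp).2, hpv⟩
    split_ifs with huv
    · exact one_lt_card.2 ⟨p, hpm, u, mem_filter.2 ⟨hu, huv⟩, hpu⟩
    · exact card_pos.2 ⟨p, hpm⟩
  obtain ⟨m, rfl⟩ : ∃ m, n = m + 2 := ⟨n - 2, by omega⟩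
  simp only [Nat.add_sub_cancel, Nat.add_succ_sub_one] at hb ⊢
  have : (m + 2) * (m + 1) = (m + 1) * m + 2 * (m + 1) := by ring
  omega

/-! ### The extremal digraph -/

lemma card_edges [Fintype V] : edgeCount G = E G univ := by
  have : {p : V × V | G p.1 p.2} =
      (((univ : Finset V) ×ˢ (univ : Finset V)).filter fun p => G p.1 p.2 : Finset (V × V)) := by
    ext p; simp
  rw [edgeCount, this, Set.ncard_coe_finset, card_filter, sum_product]
  simp only [E, outN, card_filter]

lemma upper_bound_univ [Fintype V] (hirr : ∀ a, ¬ G a a) (h : Critical G)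
    (hV : 3 ≤ Fintype.card V) :
    2 * edgeCount G + 2 * Fintype.card V ≤ Fintype.card V * (Fintype.card V - 1) + 8 := by
  rw [card_edges, ← card_univ]
  refine upper_bound hirr ?_ ?_ (by rwa [card_univ])
  · intro a _ b _
    exact Relation.ReflTransGen.mono (fun p q h => ⟨mem_univ _, mem_univ _, h⟩) _ _ (h.1 a b)
  · rw [eq_empty_iff_forall_notMem]
    intro z hz
    refine h.2 z fun a b => ?_
    have hab := (mem_filter.1 hz).2 a.1 (by simp [a.2]) b.1 (by simp [b.2])
    obtain ⟨b, hb⟩ := b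
    change Reach G _ a.1 b at hab
    induction hab with
    | refl => exact .refl
    | @tail p q _ hpq ih => exact (ih (by simpa using hpq.1)).tail hpq.2.2

/-- The extremal digraph on `0, …, n-1`: the path `0 → 1 → ⋯ → n-1` together with all backward
edges, except those into `1` and those out of `n-2`. -/
def Ext (n : ℕ) (i j : Fin n) : Prop :=
  j.1 = i.1 + 1 ∨ (j.1 < i.1 ∧ j.1 ≠ 1 ∧ i.1 + 2 ≠ n)

/-- A vertex set closed under out-neighbours, neither empty nor everything, rules out strong
connectivity. -/
lemma not_sc_of_closed {H : V → V → Prop} (X : V → Prop) (hX : ∀ a b, H a b → X a → X b)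
    {a b : V} (ha : X a) (hb : ¬ X b) : ¬ StronglyConnected H := by
  intro h
  apply hb
  have := h a b
  clear hb
  induction this with
  | refl => exact ha
  | tail _ h ih => exact hX _ _ h ih

lemma ext_critical {n : ℕ} (hn : 4 ≤ n) : Critical (Ext n) := by
  have up : ∀ (k : ℕ) (i j : Fin n), j.1 = i.1 + k → Relation.ReflTransGen (Ext n) i j := by
    intro k
    induction k with
    | zero => intro i j h; obtain rfl : j = i := Fin.ext (by simpa using h); exact .refl
    | succ k ih =>
      intro i j h
      exact (ih i ⟨i.1 + k, by omega⟩ rfl).tail (Or.inl (by simp only; omega))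
  refine ⟨fun a b => ?_, fun z => ?_⟩
  · have h1 := up (n - 1 - a.1) a ⟨n - 1, by omega⟩ (by simp only; omega)
    have h2 : Ext n ⟨n - 1, by omega⟩ ⟨0, by omega⟩ := Or.inr (by simp only; omega)
    exact (h1.tail h2).trans (up b.1 _ b (by simp))
  · by_cases hz0 : z.1 = 0
    · refine not_sc_of_closed (fun p => p.1.1 ≠ 1) ?_
        (a := ⟨⟨2, by omega⟩, fun h => by simp [← h] at hz0⟩)
        (b := ⟨⟨1, by omega⟩, fun h => by simp [← h] at hz0⟩) (by simp) (by simp)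
      rintro ⟨a, ha⟩ ⟨b, hb⟩ h -
      have : a.1 ≠ z.1 := fun h => ha (Fin.ext h)
      simp only [DelVert, Ext] at h ⊢
      omega
    by_cases hz1 : z.1 = n - 1
    · refine not_sc_of_closed (fun p => p.1.1 + 2 = n) ?_
        (a := ⟨⟨n - 2, by omega⟩, fun h => by simp [← h] at hz1; omega⟩)
        (b := ⟨⟨0, by omega⟩, fun h => by simp [← h] at hz1; omega⟩)
        (by simp only; omega) (by simp only; omega)
      rintro ⟨a, ha⟩ ⟨b, hb⟩ h h'
      have : b.1 ≠ z.1 := fun h => hb (Fin.ext h)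
      simp only [DelVert, Ext] at h h' ⊢
      omega
    · refine not_sc_of_closed (fun p => p.1.1 < z.1) ?_
        (a := ⟨⟨0, by omega⟩, fun h => by simp [← h] at hz0⟩)
        (b := ⟨⟨n - 1, by omega⟩, fun h => by simp [← h] at hz1⟩)
        (by simp only; omega) (by simp only; omega)
      rintro ⟨a, ha⟩ ⟨b, hb⟩ h h'
      have : b.1 ≠ z.1 := fun h => hb (Fin.ext h)
      simp only [DelVert, Ext] at h h' ⊢
      omega

/-- The out-degrees are `1, 2, 2, 3, …, n-3, 1, n-2`. -/
lemma ext_edges {n : ℕ} (hn : 4 ≤ n) : n * (n - 1) + 8 ≤ 2 * edgeCount (Ext n) + 2 * n := by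
  obtain ⟨m, rfl⟩ : ∃ m, n = m + 4 := ⟨n - 4, by omega⟩
  let f : ℕ → ℕ := fun i => if i = 0 then 1 else if i = 1 then 2 else if i = m + 2 then 1 else
    if i = m + 3 then m + 2 else i
  have hdeg : ∀ i : Fin (m + 4), f i.1 ≤ #(outN (Ext (m + 4)) univ i) := by
    intro i
    have inj : ∀ (U : Finset ℕ), (∀ j ∈ U, j < m + 4 ∧
        (j = i.1 + 1 ∨ (j < i.1 ∧ j ≠ 1 ∧ i.1 + 2 ≠ m + 4))) →
        #U ≤ #(outN (Ext (m + 4)) univ i) := by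
      intro U hU
      rw [← card_map Fin.valEmbedding (s := outN (Ext (m + 4)) univ i)]
      refine card_le_card fun j hj => ?_
      obtain ⟨h1, h2⟩ := hU j hj
      exact mem_map.2 ⟨⟨j, h1⟩, mem_filter.2 ⟨mem_univ _, h2⟩, rfl⟩
    have hi := i.2
    simp only [f]
    split_ifs with h0 h1 h2 h3
    · exact inj {1} (fun j hj => by rw [mem_singleton] at hj; omega)
    · exact inj {0, 2} (fun j hj => by rw [mem_insert, mem_singleton] at hj; omega)
    · exact inj {m + 3} (fun j hj => by rw [mem_singleton] at hj; omega)
    · have := inj ((range (m + 3)).erase 1)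
        (fun j hj => by rw [mem_erase, mem_range] at hj; omega)
      rwa [card_erase_of_mem (by simp), card_range] at this
    · have := inj (insert (i.1 + 1) ((range i.1).erase 1))
        (fun j hj => by rw [mem_insert, mem_erase, mem_range] at hj; omega)
      rw [card_insert_of_notMem (by simp), card_erase_of_mem (by simp; omega), card_range] at this
      omega
  have hsum : ∑ i ∈ range (m + 4), f i ≤ edgeCount (Ext (m + 4)) := by
    rw [card_edges, E, ← Fin.sum_univ_eq_sum_range]
    exact sum_le_sum fun i _ => hdeg i
  have hmid : ∑ i ∈ range m, f (i + 2) = ∑ i ∈ range m, (i + 2) := by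
    refine sum_congr rfl fun i hi => ?_
    have := mem_range.1 hi
    simp only [f]
    rw [if_neg (by omega), if_neg (by omega), if_neg (by omega), if_neg (by omega)]
  have hgauss : 2 * ∑ i ∈ range m, (i + 2) = m * (m + 3) := by
    clear * -
    induction m with
    | zero => rfl
    | succ m ih => rw [sum_range_succ, mul_add, ih]; ring
  rw [sum_range_succ, sum_range_succ, sum_range_succ', sum_range_succ', hmid] at hsum
  have h2 : f (m + 2) = 1 := by simp [f]
  have h3 : f (m + 3) = m + 2 := by simp [f]
  have h1 : f (0 + 1) = 2 := rfl
  have h0 : f 0 = 1 := rfl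
  rw [h0, h1, h2, h3] at hsum
  have : (m + 4) * (m + 4 - 1) + 8 = m * (m + 3) + 2 * (2 * m + 10) := by
    rw [show m + 4 - 1 = m + 3 by omega]; ring
  omega

end CritDigraph

theorem stmt6 (n : ℕ) (hn : 4 ≤ n) :
    IsGreatest {m : ℕ | ∃ G : Fin n → Fin n → Prop,
        Irreflexive G ∧ Critical G ∧ edgeCount G = m}
      (n * (n - 1) / 2 - n + 4) := by
  have hle : 2 * n ≤ n * (n - 1) := by
    rw [mul_comm 2]; exact Nat.mul_le_mul_left _ (by omega)
  have hup : ∀ G : Fin n → Fin n → Prop, Irreflexive G → Critical G →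
      2 * edgeCount G + 2 * n ≤ n * (n - 1) + 8 := by
    intro G hirr hG
    simpa using CritDigraph.upper_bound_univ (fun a => hirr a) hG (by simp; omega)
  refine ⟨⟨CritDigraph.Ext n, ?_, CritDigraph.ext_critical hn, ?_⟩, ?_⟩
  · intro a h
    simp only [CritDigraph.Ext] at h
    omega
  · have h1 := CritDigraph.ext_edges hn
    have h2 := hup (CritDigraph.Ext n) (fun a h => by
      simp only [CritDigraph.Ext] at h
      omega) (CritDigraph.ext_critical hn)
    omega
  · rintro m ⟨G, hirr, hG, rfl⟩
    have := hup G hirr hG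
    omega
end
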